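/- arXiv:1401.2707 — 2 statements merged into one kernel-verified Lean document; each statement's English description precedes it below -/
import Mathlib

section
/- For every ε > 0 there exist θ > 0, K and N such that for all n ≥ N, all k ≥ K dividing n, and all m with |m/n − 1/3| ≤ θ, the set E = {S ∈ I_{0,m} : N(S) > (log k)^{3n/k}·m!·2^m} satisfies Σ_{S ∈ E} N(S)² ≤ ε·(m!·2^m)²·|I_{0,m}|. -/
/-- A ROD (rooted, ordered, directed) `k`-cycle factor on `{1,…,n}`: a sequence of
`n/k` directed cycles, each on exactly `k` vertices and rooted at its first entry, whose
vertex sets partition `{1,…,n}`. -/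
def RODFactor (n k : ℕ) : Type :=
  {f : Fin (n / k) → Fin k → Fin n //
    Function.Bijective fun p : Fin (n / k) × Fin k => f p.1 p.2}

/-- The underlying undirected graph of the ROD factor `F` contains every edge of `S`. -/
def RODContains {n k : ℕ} (F : RODFactor n k) (S : SimpleGraph (Fin n)) : Prop :=
  ∀ u v : Fin n, S.Adj u v → ∃ (c : Fin (n / k)) (i : Fin k),
    (F.1 c i = u ∧ F.1 c ⟨((i : ℕ) + 1) % k, Nat.mod_lt _ i.pos⟩ = v) ∨
    (F.1 c i = v ∧ F.1 c ⟨((i : ℕ) + 1) % k, Nat.mod_lt _ i.pos⟩ = u)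

/-- `N(S)`: the number of ROD `k`-cycle factors containing the graph `S`. -/
noncomputable def NS {n : ℕ} (k : ℕ) (S : SimpleGraph (Fin n)) : ℕ :=
  Nat.card {F : RODFactor n k // RODContains F S}

/-- The connected component `c` of `G` is a path on at least 2 vertices. -/
def IsPathComponent {V : Type*} (G : SimpleGraph V) (c : G.ConnectedComponent) : Prop :=
  ∃ (ℓ : ℕ) (v : Fin ℓ → V), 2 ≤ ℓ ∧ Function.Injective v ∧ Set.range v = c.supp ∧
    ∀ a b : Fin ℓ, G.Adj (v a) (v b) ↔ ((a : ℕ) + 1 = b ∨ (b : ℕ) + 1 = a)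

/-- `G ∈ I_{0,m}`: `G` has exactly `m` connected components, each a path on at least 2
vertices. -/
def PathsGraph {n : ℕ} (G : SimpleGraph (Fin n)) (m : ℕ) : Prop :=
  Nat.card G.ConnectedComponent = m ∧ ∀ c : G.ConnectedComponent, IsPathComponent G c

/-!
Cut a factor containing a path system `S` once in every cycle, at a position where the edge of the
cycle is missing from `S`, and concatenate the pieces: the result is a linear order of the vertices
in which every path of `S` occupies consecutive positions in one of its two directions. Such an
order is determined by the order of the `m` paths and their directions, so there are at most
`m! * 2 ^ m` of them, and counting the cuts bounds
`∑ F, ∏ c, |gap F c| / k ≤ m! * 2 ^ m`, where `gap F c` is the set of missing edges of the cycle `c`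
and `F` ranges over the factors containing `S`. By Hölder's inequality,
`N(S) ^ (p + 1) ≤ (m! * 2 ^ m) ^ p * ∑ F, ∏ c, (k / |gap F c|) ^ p`.

Summing over `S` first, for fixed `F`, the sets of missing edges determine `S`, contain no two
consecutive edges of a cycle, and have at least `m` elements in total. A transfer recursion with
weight `x = lam ^ 2 - lam` per missing edge, where `lam = (m + t) / t` and `n = 2 * m + t`, bounds
the sum by `C ^ (p * n / k) * lam ^ n / x ^ m`. Up to a factor `n ^ 2` this is
`C ^ (p * n / k) * multichoose m t`, while `multichoose m t * n!` is at most
`m! * 2 ^ m * |I_{0,m}|`. Hence the average of `(N(S) / (m! * 2 ^ m)) ^ (p + 1)` is at most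
`n ^ 2 * C ^ (p * n / k)`, and for `p` about `√k` Markov's inequality beats this by the power
`p - 1` of `(log k) ^ (3 * n / k)`.
-/

section Layouts

variable {V : Type*} {n : ℕ} {S : SimpleGraph V} {φ ψ : V ≃ Fin n}

/-- A layout of `S` is a bijective labelling of the vertices by `Fin n` in which adjacent vertices
receive consecutive labels. A disjoint union of `m` paths, none a single vertex, is laid out by
choosing an order of its components and a direction for each of them. -/
def IsLayout (S : SimpleGraph V) (φ : V ≃ Fin n) : Prop :=
  S ≤ (SimpleGraph.pathGraph n).comap φ

namespace IsLayout

theorem add_one_eq_or (hφ : IsLayout S φ) {u v : V} (huv : S.Adj u v) :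
    (φ u : ℕ) + 1 = φ v ∨ (φ v : ℕ) + 1 = φ u :=
  SimpleGraph.pathGraph_adj.mp (hφ huv)

theorem lt_of_reachable_left (hφ : IsLayout S φ) {u v w : V} (huv : S.Reachable u v)
    (huw : ¬S.Reachable u w) (hlt : φ u < φ w) : φ v < φ w := by
  obtain ⟨p⟩ := huv
  induction p with
  | nil => exact hlt
  | @cons a b _ hadj _ ih =>
    refine ih (fun hr => huw (hadj.reachable.trans hr)) ?_
    have hne : φ b ≠ φ w := φ.injective.ne fun h => huw (h ▸ hadj.reachable)
    have := hφ.add_one_eq_or hadj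
    omega

theorem lt_iff_lt_of_reachable (hφ : IsLayout S φ) {u u' w w' : V} (hu : S.Reachable u u')
    (hw : S.Reachable w w') (huw : ¬S.Reachable u w) : φ u < φ w ↔ φ u' < φ w' := by
  have move_left {a b c : V} (hab : S.Reachable a b) (hac : ¬S.Reachable a c) :
      φ a < φ c ↔ φ b < φ c :=
    ⟨hφ.lt_of_reachable_left hab hac,
      hφ.lt_of_reachable_left hab.symm fun hbc => hac (hab.trans hbc)⟩
  have huw' : ¬S.Reachable u' w := fun h => huw (hu.trans h)
  have hwu' : ¬S.Reachable w u' := fun h => huw' h.symm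
  have hne : φ u' ≠ φ w := φ.injective.ne fun h => huw' (h ▸ .refl _)
  have hne' : φ u' ≠ φ w' := φ.injective.ne fun h => hwu' (h ▸ hw)
  have := move_left hw hwu'
  rw [move_left hu huw]
  omega

-- The two neighbours of a vertex carry the labels just below and just above its own.
theorem lt_iff_lt_of_adj (hφ : IsLayout S φ) (hψ : IsLayout S ψ) {u v w : V} (huv : S.Adj u v)
    (hdir : φ u < φ v ↔ ψ u < ψ v) (huw : S.Adj u w) : φ u < φ w ↔ ψ u < ψ w := by
  obtain rfl | hvw := eq_or_ne v w
  · exact hdir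
  have := φ.injective.ne hvw
  have := ψ.injective.ne hvw
  have := hφ.add_one_eq_or huv
  have := hφ.add_one_eq_or huw
  have := hψ.add_one_eq_or huv
  have := hψ.add_one_eq_or huw
  omega

theorem sub_eq_sub_of_reachable (hφ : IsLayout S φ) (hψ : IsLayout S ψ) {u w : V}
    (hdir : ∀ v, S.Adj u v → (φ u < φ v ↔ ψ u < ψ v)) (huw : S.Reachable u w) :
    (φ w : ℤ) - (φ u : ℤ) = (ψ w : ℤ) - (ψ u : ℤ) := by
  obtain ⟨p⟩ := huw
  induction p with
  | nil => simp only [sub_self]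
  | @cons u v w hadj _ ih =>
    have hdir_uv := hdir v hadj
    have hφuv := hφ.add_one_eq_or hadj
    have hψuv := hψ.add_one_eq_or hadj
    have hdir_vu : φ v < φ u ↔ ψ v < ψ u := by omega
    have := ih fun x hx => hφ.lt_iff_lt_of_adj hψ hadj.symm hdir_vu hx
    omega

theorem eq_of_lt_iff_lt (h : ∀ u w, φ u < φ w ↔ ψ u < ψ w) : φ = ψ := by
  let e : Fin n ≃o Fin n :=
    { toEquiv := φ.symm.trans ψ
      map_rel_iff' := by
        intro a b
        have := h (φ.symm b) (φ.symm a)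
        simp only [Equiv.apply_symm_apply] at this
        simp only [Equiv.trans_apply, ← not_lt, this] }
  ext v
  have he : e (φ v) = φ v := by rw [Subsingleton.elim e (OrderIso.refl _), OrderIso.refl_apply]
  simpa [e] using congrArg Fin.val he.symm

theorem eq_of_out (hφ : IsLayout S φ) (hψ : IsLayout S ψ)
    (hord : ∀ C D : S.ConnectedComponent, φ C.out < φ D.out ↔ ψ C.out < ψ D.out)
    (hdir : ∀ (C : S.ConnectedComponent) (v : V), S.Adj C.out v →
      (φ C.out < φ v ↔ ψ C.out < ψ v)) : φ = ψ := by
  have hout (v : V) : S.Reachable v (S.connectedComponentMk v).out :=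
    SimpleGraph.ConnectedComponent.exact (Quot.out_eq _).symm
  refine eq_of_lt_iff_lt fun u w => ?_
  by_cases huw : S.Reachable u w
  · have hu := hφ.sub_eq_sub_of_reachable hψ (hdir _) (hout u).symm
    have hw := hφ.sub_eq_sub_of_reachable hψ (hdir _) ((hout u).symm.trans huw)
    omega
  · rw [hφ.lt_iff_lt_of_reachable (hout u) (hout w) huw,
      hψ.lt_iff_lt_of_reachable (hout u) (hout w) huw, hord]

end IsLayout

theorem exists_equiv_fin_lt_iff_lt {ι α : Type*} [Finite ι] [LinearOrder α] (f : ι ↪ α) :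
    ∃ e : ι ≃ Fin (Nat.card ι), ∀ a b, e a < e b ↔ f a < f b := by
  have := Fintype.ofFinite ι
  let := LinearOrder.lift' f f.injective
  let e := (Fintype.orderIsoFinOfCardEq ι Nat.card_eq_fintype_card.symm).symm
  exact ⟨e.toEquiv, fun _ _ => e.lt_iff_lt⟩

theorem card_layouts_le [Finite V] (S : SimpleGraph V) (n : ℕ) :
    Nat.card {φ : V ≃ Fin n // IsLayout S φ} ≤
      (Nat.card S.ConnectedComponent).factorial * 2 ^ Nat.card S.ConnectedComponent := by
  have hout : Function.Injective (Quot.out : S.ConnectedComponent → V) :=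
    Function.LeftInverse.injective Quot.out_eq
  choose rank hrank using fun φ : V ≃ Fin n =>
    exists_equiv_fin_lt_iff_lt (⟨fun C : S.ConnectedComponent => φ C.out,
      φ.injective.comp hout⟩ : S.ConnectedComponent ↪ Fin n)
  have hnbr (u : V) : ∃ v, ∀ w, S.Adj u w → S.Adj u v := by
    by_cases hu : ∃ v, S.Adj u v
    · exact hu.imp fun _ hv _ _ => hv
    · exact ⟨u, fun w hw => (hu ⟨w, hw⟩).elim⟩
  choose nbr hnbr using hnbr
  let code (φ : {φ : V ≃ Fin n // IsLayout S φ}) :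
      (S.ConnectedComponent ≃ Fin (Nat.card S.ConnectedComponent)) ×
        (S.ConnectedComponent → Prop) :=
    (rank φ, fun C => φ.1 C.out < φ.1 (nbr C.out))
  have hcode : Function.Injective code := by
    rintro ⟨φ, hφ⟩ ⟨ψ, hψ⟩ h
    obtain ⟨hr, hd⟩ := Prod.ext_iff.mp h
    dsimp only [code] at hr hd
    refine Subtype.ext (hφ.eq_of_out hψ (fun C D => ?_) fun C v hv => ?_)
    · exact (hrank φ C D).symm.trans (hr ▸ hrank ψ C D)
    · exact hφ.lt_iff_lt_of_adj hψ (hnbr _ v hv) (iff_of_eq (congrFun hd C)) hv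
  refine (Nat.card_le_card_of_injective code hcode).trans_eq ?_
  have := Fintype.ofFinite S.ConnectedComponent
  classical
  rw [Nat.card_prod, Nat.card_fun, Nat.card_eq_fintype_card (α := _ ≃ _),
    Fintype.card_equiv (Finite.equivFin _), Nat.card_eq_fintype_card (α := Prop),
    Fintype.card_prop, Nat.card_eq_fintype_card]

end Layouts

section PathSystems

variable {V : Type*} {n : ℕ} (c d : Composition n) (φ : V ≃ Fin n)

/-- The disjoint union of paths obtained by cutting the path on `V` with labels `φ` into
consecutive blocks whose sizes are given by the composition `c`. -/
def pathsOfComposition : SimpleGraph V where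
  Adj u v := c.index (φ u) = c.index (φ v) ∧ (SimpleGraph.pathGraph n).Adj (φ u) (φ v)
  symm := ⟨fun _ _ h => ⟨h.1.symm, h.2.symm⟩⟩
  loopless := ⟨fun _ h => h.2.ne rfl⟩

namespace pathsOfComposition

theorem isLayout : IsLayout (pathsOfComposition c φ) φ := fun _ _ h => h.2

theorem adj_symm_embedding (i : Fin c.length) (a b : Fin (c.blocksFun i)) :
    (pathsOfComposition c φ).Adj (φ.symm (c.embedding i a)) (φ.symm (c.embedding i b)) ↔
      (a : ℕ) + 1 = b ∨ (b : ℕ) + 1 = a := by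
  simp only [pathsOfComposition, Equiv.apply_symm_apply, c.index_embedding, true_and,
    SimpleGraph.pathGraph_adj, c.coe_embedding]
  omega

theorem reachable_iff {u v : V} :
    (pathsOfComposition c φ).Reachable u v ↔ c.index (φ u) = c.index (φ v) := by
  constructor
  · rintro ⟨p⟩
    induction p with
    | nil => rfl
    | cons hadj _ ih => exact hadj.1.trans ih
  · intro h
    obtain ⟨a, ha⟩ := c.mem_range_embedding (φ u)
    obtain ⟨b, hb⟩ := c.mem_range_embedding_iff'.mpr h
    let block : SimpleGraph.pathGraph (c.blocksFun (c.index (φ u))) →g pathsOfComposition c φ :=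
      ⟨fun x => φ.symm (c.embedding _ x), fun hxy =>
        (adj_symm_embedding c φ _ _ _).mpr (SimpleGraph.pathGraph_adj.mp hxy)⟩
    have := (SimpleGraph.pathGraph_preconnected _ a b).map block
    simpa only [block, RelHom.coeFn_mk, ha, hb, Equiv.symm_apply_apply] using this

theorem card_connectedComponent :
    Nat.card (pathsOfComposition c φ).ConnectedComponent = c.length := by
  let index : (pathsOfComposition c φ).ConnectedComponent → Fin c.length :=
    Quot.lift (fun v => c.index (φ v)) fun _ _ h => (reachable_iff c φ).mp h
  have hindex : index.Bijective := by
    constructor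
    · rintro ⟨u⟩ ⟨v⟩ h
      exact Quot.sound ((reachable_iff c φ).mpr h)
    · intro i
      refine ⟨Quot.mk _ (φ.symm (c.embedding i ⟨0, c.blocks_pos' i i.2⟩)), ?_⟩
      simp only [index, Equiv.apply_symm_apply, c.index_embedding]
  rw [Nat.card_eq_of_bijective index hindex, Nat.card_eq_fintype_card, Fintype.card_fin]

theorem isPathComponent (hc : ∀ i, 2 ≤ c.blocksFun i)
    (C : (pathsOfComposition c φ).ConnectedComponent) :
    IsPathComponent (pathsOfComposition c φ) C := by
  induction C using SimpleGraph.ConnectedComponent.ind with | _ u => ?_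
  refine ⟨c.blocksFun (c.index (φ u)), fun a => φ.symm (c.embedding _ a), hc _,
    φ.symm.injective.comp (c.embedding _).injective, ?_, adj_symm_embedding c φ _⟩
  ext v
  rw [SimpleGraph.ConnectedComponent.mem_supp_iff, SimpleGraph.ConnectedComponent.eq,
    SimpleGraph.reachable_comm, reachable_iff, ← c.mem_range_embedding_iff']
  simp only [Set.mem_range, Equiv.symm_apply_eq]

end pathsOfComposition

variable {c d}

theorem index_eq_iff_sizeUpTo_le_and_lt {i : Fin c.length} {j : Fin n} :
    c.index j = i ↔ c.sizeUpTo i ≤ j ∧ (j : ℕ) < c.sizeUpTo (i + 1) := by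
  rw [eq_comm, ← c.mem_range_embedding_iff', c.mem_range_embedding_iff]

theorem sizeUpTo_succ_le_of_index_eq_imp (h : ∀ x y, c.index x = c.index y → d.index x = d.index y)
    {i : ℕ} (hic : i < c.length) (hid : i < d.length) (hi : c.sizeUpTo i = d.sizeUpTo i) :
    c.sizeUpTo (i + 1) ≤ d.sizeUpTo (i + 1) := by
  have hlt := c.sizeUpTo_strict_mono hic
  have hlt' := d.sizeUpTo_strict_mono hid
  have hle := c.sizeUpTo_le (i + 1)
  let first : Fin n := ⟨c.sizeUpTo i, by omega⟩
  let last : Fin n := ⟨c.sizeUpTo (i + 1) - 1, by omega⟩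
  have hfirst : c.index first = ⟨i, hic⟩ :=
    index_eq_iff_sizeUpTo_le_and_lt.mpr ⟨le_rfl, hlt⟩
  have hlast : c.index last = ⟨i, hic⟩ :=
    index_eq_iff_sizeUpTo_le_and_lt.mpr ⟨by dsimp only [last]; omega, by dsimp only [last]; omega⟩
  have hfirst' : d.index first = ⟨i, hid⟩ :=
    index_eq_iff_sizeUpTo_le_and_lt.mpr ⟨hi.ge, hi.trans_lt hlt'⟩
  have hlast' := (h last first (hlast.trans hfirst.symm)).trans hfirst'
  have := (index_eq_iff_sizeUpTo_le_and_lt.mp hlast').2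
  dsimp only [last] at this
  omega

theorem composition_eq_of_index_eq_iff (hlen : c.length = d.length)
    (h : ∀ x y, c.index x = c.index y ↔ d.index x = d.index y) : c = d := by
  have hsize : ∀ i ≤ c.length, c.sizeUpTo i = d.sizeUpTo i := by
    intro i hi
    induction i with
    | zero => rw [c.sizeUpTo_zero, d.sizeUpTo_zero]
    | succ i ih =>
      have ih := ih (by omega)
      exact le_antisymm
        (sizeUpTo_succ_le_of_index_eq_imp (fun x y => (h x y).mp) hi (hlen ▸ hi) ih)
        (sizeUpTo_succ_le_of_index_eq_imp (fun x y => (h x y).mpr) (hlen ▸ hi) hi ih.symm)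
  refine Composition.ext (List.ext_getElem hlen fun i hic hid => ?_)
  have hc := c.sizeUpTo_succ hic
  have hd := d.sizeUpTo_succ hid
  have := hsize i hic.le
  have := hsize (i + 1) hic
  omega

theorem composition_eq_of_pathsOfComposition_eq {φ : V ≃ Fin n}
    (h : pathsOfComposition c φ = pathsOfComposition d φ) : c = d := by
  refine composition_eq_of_index_eq_iff ?_ fun x y => ?_
  · rw [← pathsOfComposition.card_connectedComponent c φ, h,
      pathsOfComposition.card_connectedComponent]
  · rw [← φ.apply_symm_apply x, ← φ.apply_symm_apply y, ← pathsOfComposition.reachable_iff, h,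
      pathsOfComposition.reachable_iff]

theorem multichoose_le_card_compositions {m t : ℕ} (hn : n = 2 * m + t) :
    m.multichoose t ≤
      Nat.card {c : Composition n // c.length = m ∧ ∀ i, 2 ≤ c.blocksFun i} := by
  have hsum (f : Finset.finsuppAntidiag (Finset.univ : Finset (Fin m)) t) :
      (List.ofFn fun i => f.1 i + 2).sum = n := by
    have := (Finset.mem_finsuppAntidiag.mp f.2).1
    rw [List.sum_ofFn, Finset.sum_add_distrib, this, Finset.sum_const, Finset.card_univ,
      Fintype.card_fin]
    simp only [smul_eq_mul]
    omega
  let comp (f : Finset.finsuppAntidiag (Finset.univ : Finset (Fin m)) t) : Composition n :=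
    ⟨List.ofFn fun i => f.1 i + 2, by simp only [List.mem_ofFn]; rintro _ ⟨i, rfl⟩; omega, hsum f⟩
  have hcomp (f) : (comp f).length = m ∧ ∀ i, 2 ≤ (comp f).blocksFun i := by
    refine ⟨List.length_ofFn, fun i => ?_⟩
    have : (comp f).blocksFun i = f.1 (i.cast List.length_ofFn) + 2 := List.get_ofFn _ _
    omega
  calc m.multichoose t = Nat.card (Finset.finsuppAntidiag (Finset.univ : Finset (Fin m)) t) := by
        rw [Nat.card_eq_fintype_card, Fintype.card_coe,
          Finset.card_finsuppAntidiag_nat_eq_multichoose, Finset.card_univ, Fintype.card_fin]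
    _ ≤ _ := Nat.card_le_card_of_injective (fun f => ⟨comp f, hcomp f⟩) fun f g hfg => by
        have := List.ofFn_injective (congrArg Composition.blocks (Subtype.ext_iff.mp hfg))
        exact Subtype.ext (Finsupp.ext fun i => Nat.add_right_cancel (congrFun this i))

theorem multichoose_mul_factorial_le {m t : ℕ} (hn : n = 2 * m + t) :
    m.multichoose t * n.factorial ≤
      Nat.card {S : SimpleGraph (Fin n) // PathsGraph S m} * (m.factorial * 2 ^ m) := by
  classical
  let P := {c : Composition n // c.length = m ∧ ∀ i, 2 ≤ c.blocksFun i}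
  let cut (x : P × Equiv.Perm (Fin n)) :
      Σ S : {S : SimpleGraph (Fin n) // PathsGraph S m}, {φ // IsLayout S.1 φ} :=
    ⟨⟨pathsOfComposition x.1 x.2,
        (pathsOfComposition.card_connectedComponent _ _).trans x.1.2.1,
        pathsOfComposition.isPathComponent _ _ x.1.2.2⟩,
      x.2, pathsOfComposition.isLayout _ _⟩
  have hcut : cut.Injective := by
    rintro ⟨c, φ⟩ ⟨d, ψ⟩ h
    obtain rfl : φ = ψ := congrArg (fun y => y.2.1) h
    have hgraph := congrArg (fun y => y.1.1) h
    rw [Subtype.ext (composition_eq_of_pathsOfComposition_eq hgraph) (a1 := c)]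
  calc m.multichoose t * n.factorial ≤ Nat.card P * Nat.card (Equiv.Perm (Fin n)) := by
        rw [Nat.card_perm, Nat.card_eq_fintype_card (α := Fin n), Fintype.card_fin]
        gcongr
        exact multichoose_le_card_compositions hn
    _ ≤ ∑ S : {S : SimpleGraph (Fin n) // PathsGraph S m}, Nat.card {φ // IsLayout S.1 φ} := by
        rw [← Nat.card_prod, ← Nat.card_sigma]
        exact Nat.card_le_card_of_injective cut hcut
    _ ≤ ∑ S : {S : SimpleGraph (Fin n) // PathsGraph S m}, m.factorial * 2 ^ m :=
        Finset.sum_le_sum fun S _ => S.2.1 ▸ card_layouts_le S.1 n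
    _ = _ := by rw [Finset.sum_const, smul_eq_mul, Finset.card_univ, Nat.card_eq_fintype_card]

end PathSystems

section Gaps

namespace IsPathComponent

variable {V : Type*} {G : SimpleGraph V} {C : G.ConnectedComponent}

theorem exists_adj (h : IsPathComponent G C) {u : V} (hu : u ∈ C.supp) : ∃ v, G.Adj u v := by
  obtain ⟨ℓ, v, hℓ, -, hrange, hadj⟩ := h
  obtain ⟨a, rfl⟩ := hrange.symm ▸ hu
  by_cases ha : (a : ℕ) + 1 < ℓ
  · exact ⟨v ⟨a + 1, ha⟩, (hadj _ _).mpr (.inl rfl)⟩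
  · exact ⟨v ⟨a - 1, by omega⟩, (hadj _ _).mpr (.inr (by dsimp only; omega))⟩

theorem exists_leaf (h : IsPathComponent G C) :
    ∃ u ∈ C.supp, (G.neighborSet u).Subsingleton := by
  obtain ⟨ℓ, v, hℓ, -, hrange, hadj⟩ := h
  let first : Fin ℓ := ⟨0, by omega⟩
  have hfirst : v first ∈ C.supp := hrange ▸ Set.mem_range_self first
  have hnbr : ∀ x ∈ G.neighborSet (v first), x = v ⟨1, hℓ⟩ := by
    intro x hx
    obtain ⟨b, rfl⟩ := hrange.symm ▸ C.mem_supp_of_adj_mem_supp hfirst hx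
    have := (hadj first b).mp hx
    dsimp only [first] at this
    exact congrArg v (Fin.ext (by dsimp only; omega))
  exact ⟨v first, hfirst, fun x hx y hy => (hnbr x hx).trans (hnbr y hy).symm⟩

end IsPathComponent

theorem fin_val_add_one_of_ne_zero {k : ℕ} [NeZero k] {i : Fin k} (h : i + 1 ≠ 0) :
    ((i + 1 : Fin k) : ℕ) = i + 1 := by
  obtain ⟨k, rfl⟩ := Nat.exists_eq_succ_of_ne_zero (NeZero.ne k)
  rw [Fin.val_add_one, if_neg]
  rintro rfl
  exact h (Fin.last_add_one k)

variable {n k : ℕ}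

namespace RODFactor

/-- A factor as a bijection sending `(c, i)` to the `i`-th vertex of its `c`-th cycle. -/
noncomputable def toEquiv (F : RODFactor n k) : Fin (n / k) × Fin k ≃ Fin n :=
  Equiv.ofBijective _ F.2

theorem toEquiv_bijective :
    Function.Bijective (toEquiv : RODFactor n k → (Fin (n / k) × Fin k ≃ Fin n)) :=
  ⟨fun _ _ h => Subtype.ext (funext₂ fun c i => Equiv.congr_fun h (c, i)),
    fun e => ⟨⟨fun c i => e (c, i), e.bijective⟩, Equiv.ext fun _ => rfl⟩⟩

noncomputable instance : Fintype (RODFactor n k) := Fintype.ofInjective _ toEquiv_bijective.1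

theorem card_eq_factorial (hkn : k ∣ n) : Fintype.card (RODFactor n k) = n.factorial := by
  rw [Fintype.card_of_bijective toEquiv_bijective,
    Fintype.card_equiv (finProdFinEquiv.trans (finCongr (Nat.div_mul_cancel hkn))),
    Fintype.card_prod, Fintype.card_fin, Fintype.card_fin, Nat.div_mul_cancel hkn]

theorem eq_of_apply_eq (F : RODFactor n k) {c d : Fin (n / k)} {i j : Fin k}
    (h : F.1 c i = F.1 d j) : c = d ∧ i = j :=
  Prod.mk.inj (F.2.injective h)

theorem exists_apply_eq (F : RODFactor n k) (u : Fin n) : ∃ c i, F.1 c i = u := by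
  obtain ⟨⟨c, i⟩, h⟩ := F.2.surjective u
  exact ⟨c, i, h⟩

variable [NeZero k] (F : RODFactor n k) (S : SimpleGraph (Fin n))

open Classical in
/-- The gaps of `S` along the `c`-th cycle of `F`: the positions `i` such that the edge of the cycle
leaving its `i`-th vertex does not belong to `S`. Indices are added in `Fin k`, hence cyclically. -/
noncomputable def gap (c : Fin (n / k)) : Finset (Fin k) :=
  {i | ¬S.Adj (F.1 c i) (F.1 c (i + 1))}

variable {F S} {c : Fin (n / k)} {i : Fin k}

theorem mem_gap : i ∈ F.gap S c ↔ ¬S.Adj (F.1 c i) (F.1 c (i + 1)) := by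
  simp only [gap, Finset.mem_filter, Finset.mem_univ, true_and]

open Fin.CommRing in
theorem exists_mem_gap_of_leaf (hk : 3 ≤ k) (hleaf : (S.neighborSet (F.1 c i)).Subsingleton) :
    ∃ j ∈ F.gap S c, S.Reachable (F.1 c i) (F.1 c j) := by
  by_contra! hno
  have hreach (s : ℕ) : S.Reachable (F.1 c i) (F.1 c (i + s)) := by
    induction s with
    | zero => rw [Nat.cast_zero, add_zero]
    | succ s ih =>
      have hadj := not_not.mp (mem_gap.not.mp fun hs => hno _ hs ih)
      rw [Nat.cast_succ, ← add_assoc]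
      exact ih.trans hadj.reachable
  have hadj (j : Fin k) : S.Adj (F.1 c j) (F.1 c (j + 1)) := by
    have := hreach (j - i : Fin k)
    rw [Fin.cast_val_eq_self, add_sub_cancel] at this
    exact not_not.mp (mem_gap.not.mp fun hj => hno j hj this)
  have hprev : S.Adj (F.1 c i) (F.1 c (i - 1)) := by
    have := hadj (i - 1)
    rw [sub_add_cancel] at this
    exact this.symm
  have heq : i + 1 = i - 1 := (F.eq_of_apply_eq (hleaf (hadj i) hprev)).2
  have htwo : (1 + 1 : Fin k) = 0 := by
    rw [← add_right_inj i, ← add_assoc, heq, sub_add_cancel, add_zero]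
  have := congrArg Fin.val htwo
  rw [Fin.val_add, Fin.val_one', Nat.mod_eq_of_lt (a := 1) (by omega),
    Nat.mod_eq_of_lt (by omega)] at this
  exact two_ne_zero this

end RODFactor

namespace RODContains

variable [NeZero k] {F : RODFactor n k} {S T : SimpleGraph (Fin n)} {c : Fin (n / k)} {i : Fin k}

theorem exists_apply_eq_of_adj (hF : RODContains F S) {u v : Fin n} (huv : S.Adj u v) :
    ∃ c i, (F.1 c i = u ∧ F.1 c (i + 1) = v) ∨ (F.1 c i = v ∧ F.1 c (i + 1) = u) := by
  have hsucc (i : Fin k) : (⟨((i : ℕ) + 1) % k, Nat.mod_lt _ i.pos⟩ : Fin k) = i + 1 :=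
    Fin.ext (by rw [Fin.val_add, Fin.val_one', Nat.add_mod_mod])
  simpa only [hsucc] using hF u v huv

theorem eq_or_eq_of_adj (hF : RODContains F S) {v : Fin n} (h : S.Adj (F.1 c i) v) :
    v = F.1 c (i + 1) ∨ v = F.1 c (i - 1) := by
  obtain ⟨d, j, ⟨hu, rfl⟩ | ⟨rfl, hu⟩⟩ := hF.exists_apply_eq_of_adj h
  · obtain ⟨rfl, rfl⟩ := F.eq_of_apply_eq hu
    exact .inl rfl
  · obtain ⟨rfl, rfl⟩ := F.eq_of_apply_eq hu
    exact .inr (by rw [add_sub_cancel_right])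

theorem le_of_gap_le (hF : RODContains F S) (hgap : F.gap T ≤ F.gap S) : S ≤ T := by
  have hT {c i} (h : S.Adj (F.1 c i) (F.1 c (i + 1))) : T.Adj (F.1 c i) (F.1 c (i + 1)) :=
    not_not.mp fun hnot => RODFactor.mem_gap.mp (hgap c (RODFactor.mem_gap.mpr hnot)) h
  intro u v huv
  obtain ⟨c, i, ⟨rfl, rfl⟩ | ⟨rfl, rfl⟩⟩ := hF.exists_apply_eq_of_adj huv
  · exact hT huv
  · exact (hT huv.symm).symm

theorem eq_of_gap_eq (hS : RODContains F S) (hT : RODContains F T) (h : F.gap S = F.gap T) :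
    S = T :=
  le_antisymm (hS.le_of_gap_le h.ge) (hT.le_of_gap_le h.le)

theorem add_one_notMem_gap (hF : RODContains F S) (hnbr : ∀ u, ∃ v, S.Adj u v)
    (hi : i ∈ F.gap S c) : i + 1 ∉ F.gap S c := by
  intro hi'
  obtain ⟨v, hv⟩ := hnbr (F.1 c (i + 1))
  obtain rfl | rfl := hF.eq_or_eq_of_adj hv
  · exact RODFactor.mem_gap.mp hi' hv
  · rw [add_sub_cancel_right] at hv
    exact RODFactor.mem_gap.mp hi hv.symm

theorem exists_apply_eq_of_reachable (hF : RODContains F S) {v : Fin n}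
    (h : S.Reachable (F.1 c i) v) : ∃ j, F.1 c j = v := by
  obtain ⟨p⟩ := h
  generalize hu : F.1 c i = u at p
  induction p generalizing i with
  | nil => exact ⟨i, hu⟩
  | cons hadj _ ih =>
    subst hu
    obtain rfl | rfl := hF.eq_or_eq_of_adj hadj
    exacts [ih rfl, ih rfl]

theorem gap_nonempty (hF : RODContains F S) (hk : 3 ≤ k)
    (hleaf : ∀ C : S.ConnectedComponent, ∃ u ∈ C.supp, (S.neighborSet u).Subsingleton)
    (c : Fin (n / k)) : (F.gap S c).Nonempty := by
  obtain ⟨u, hu, hsub⟩ := hleaf (S.connectedComponentMk (F.1 c 0))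
  obtain ⟨i, rfl⟩ :=
    hF.exists_apply_eq_of_reachable (SimpleGraph.ConnectedComponent.exact hu).symm
  obtain ⟨j, hj, -⟩ := RODFactor.exists_mem_gap_of_leaf hk hsub
  exact ⟨j, hj⟩

end RODContains

theorem RODFactor.card_connectedComponent_le_sum_card_gap [NeZero k] (F : RODFactor n k)
    {S : SimpleGraph (Fin n)} (hk : 3 ≤ k)
    (hleaf : ∀ C : S.ConnectedComponent, ∃ u ∈ C.supp, (S.neighborSet u).Subsingleton) :
    Nat.card S.ConnectedComponent ≤ ∑ c, (F.gap S c).card := by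
  let component (x : Σ c, F.gap S c) : S.ConnectedComponent :=
    S.connectedComponentMk (F.1 x.1 x.2)
  have hsurj : component.Surjective := by
    intro C
    obtain ⟨u, rfl, hsub⟩ := hleaf C
    obtain ⟨c, i, rfl⟩ := F.exists_apply_eq u
    obtain ⟨j, hj, hreach⟩ := F.exists_mem_gap_of_leaf hk hsub
    exact ⟨⟨c, j, hj⟩, SimpleGraph.ConnectedComponent.sound hreach.symm⟩
  refine (Nat.card_le_card_of_surjective component hsurj).trans_eq ?_
  simp only [Nat.card_eq_fintype_card, Fintype.card_sigma, Fintype.card_coe]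

end Gaps

section Straighten

variable {n k : ℕ} [NeZero k]

namespace RODFactor

/-- The labelling of the vertices obtained by cutting the `c`-th cycle of `F` just after its
`g c`-th vertex, for each `c`, and concatenating the resulting paths. -/
noncomputable def straighten (hkn : k ∣ n) (F : RODFactor n k) (g : Fin (n / k) → Fin k) :
    Fin n ≃ Fin n :=
  F.toEquiv.symm.trans <| (Equiv.prodCongrRight fun c => Equiv.subRight (g c + 1)).trans <|
    finProdFinEquiv.trans (finCongr (Nat.div_mul_cancel hkn))

theorem straighten_injective (hkn : k ∣ n) (g : Fin (n / k) → Fin k) :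
    Function.Injective fun F : RODFactor n k => F.straighten hkn g := by
  intro F G h
  have h' : F.toEquiv.symm = G.toEquiv.symm := by
    ext1 u
    simpa only [straighten, Equiv.trans_apply, EmbeddingLike.apply_eq_iff_eq] using
      Equiv.congr_fun h u
  exact toEquiv_bijective.1 (Equiv.symm_bijective.injective h')

theorem straighten_apply (hkn : k ∣ n) (F : RODFactor n k) (g : Fin (n / k) → Fin k)
    (c : Fin (n / k)) (i : Fin k) :
    (F.straighten hkn g (F.1 c i) : ℕ) = (i - (g c + 1) : Fin k) + k * c := by
  have : F.toEquiv.symm (F.1 c i) = (c, i) := F.toEquiv.symm_apply_apply (c, i)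
  simp only [straighten, Equiv.trans_apply, this, Equiv.prodCongrRight_apply, Equiv.subRight_apply,
    finCongr_apply, Fin.val_cast, finProdFinEquiv_apply_val]

end RODFactor

theorem RODContains.isLayout_straighten {F : RODFactor n k} {S : SimpleGraph (Fin n)}
    (hF : RODContains F S) (hkn : k ∣ n) {g : Fin (n / k) → Fin k} (hg : ∀ c, g c ∈ F.gap S c) :
    IsLayout S (F.straighten hkn g) := by
  have hstep {c i} (h : S.Adj (F.1 c i) (F.1 c (i + 1))) :
      (F.straighten hkn g (F.1 c i) : ℕ) + 1 = F.straighten hkn g (F.1 c (i + 1)) := by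
    have hne : i ≠ g c := fun hi => RODFactor.mem_gap.mp (hg c) (hi ▸ h)
    have hshift : i + 1 - (g c + 1) = i - (g c + 1) + 1 := by abel
    have hne0 : i - (g c + 1) + 1 ≠ 0 := by
      rwa [← hshift, sub_ne_zero, add_left_injective (1 : Fin k) |>.ne_iff]
    rw [F.straighten_apply, F.straighten_apply, hshift, fin_val_add_one_of_ne_zero hne0]
    omega
  intro u v huv
  refine SimpleGraph.pathGraph_adj.mpr ?_
  obtain ⟨c, i, ⟨rfl, rfl⟩ | ⟨rfl, rfl⟩⟩ := hF.exists_apply_eq_of_adj huv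
  · exact .inl (hstep huv)
  · exact .inr (hstep huv.symm)

open Classical in
theorem sum_prod_card_gap_le (hkn : k ∣ n) (S : SimpleGraph (Fin n)) :
    ∑ F : RODFactor n k with RODContains F S, ∏ c, (F.gap S c).card ≤
      k ^ (n / k) *
        ((Nat.card S.ConnectedComponent).factorial * 2 ^ Nat.card S.ConnectedComponent) := by
  let cut (x : Σ F : {F : RODFactor n k // RODContains F S}, ∀ c, F.1.gap S c) :
      (Fin (n / k) → Fin k) × {φ : Fin n ≃ Fin n // IsLayout S φ} :=
    (fun c => x.2 c, ⟨x.1.1.straighten hkn fun c => x.2 c,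
      x.1.2.isLayout_straighten hkn fun c => (x.2 c).2⟩)
  have hcut : cut.Injective := by
    rintro ⟨⟨F, hF⟩, g⟩ ⟨⟨G, hG⟩, g'⟩ h
    obtain ⟨hg, hφ⟩ := Prod.ext_iff.mp h
    have hφ := Subtype.ext_iff.mp hφ
    dsimp only [cut] at hg hφ
    rw [← hg] at hφ
    obtain rfl : F = G := RODFactor.straighten_injective hkn _ hφ
    obtain rfl : g = g' := funext fun c => Subtype.ext (congrFun hg c)
    rfl
  calc ∑ F : RODFactor n k with RODContains F S, ∏ c, (F.gap S c).card
      = Nat.card (Σ F : {F : RODFactor n k // RODContains F S}, ∀ c, F.1.gap S c) := by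
        simp only [Nat.card_eq_fintype_card, Fintype.card_sigma, Fintype.card_pi, Fintype.card_coe]
        exact Finset.sum_subtype _ (fun _ => by rw [Finset.mem_filter_univ]) _
    _ ≤ Nat.card ((Fin (n / k) → Fin k) × {φ : Fin n ≃ Fin n // IsLayout S φ}) :=
        Nat.card_le_card_of_injective cut hcut
    _ ≤ _ := by
        rw [Nat.card_prod, Nat.card_fun, Nat.card_eq_fintype_card (α := Fin _),
          Nat.card_eq_fintype_card (α := Fin _), Fintype.card_fin, Fintype.card_fin]
        exact Nat.mul_le_mul_left _ (card_layouts_le S n)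

end Straighten

section SparseSets

/-- The subsets of `{0, …, k - 1}` without two consecutive elements. -/
def sparseSubsets (k : ℕ) : Finset (Finset ℕ) :=
  {b ∈ (Finset.range k).powerset | ∀ i ∈ b, i + 1 ∉ b}

theorem mem_sparseSubsets {k : ℕ} {b : Finset ℕ} :
    b ∈ sparseSubsets k ↔ (∀ i ∈ b, i < k) ∧ ∀ i ∈ b, i + 1 ∉ b := by
  simp only [sparseSubsets, Finset.mem_filter, Finset.mem_powerset, Finset.subset_iff,
    Finset.mem_range]

theorem sparseSubsets_add_two (k : ℕ) :
    sparseSubsets (k + 2) = sparseSubsets (k + 1) ∪ (sparseSubsets k).image (insert (k + 1)) := by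
  ext b
  simp only [Finset.mem_union, Finset.mem_image, mem_sparseSubsets]
  constructor
  · rintro ⟨hlt, hsep⟩
    by_cases hb : k + 1 ∈ b
    · exact .inr ⟨b.erase (k + 1), by grind, Finset.insert_erase hb⟩
    · exact .inl (by grind)
  · rintro (⟨hlt, hsep⟩ | ⟨a, ⟨hlt, hsep⟩, rfl⟩) <;> grind

theorem sum_sparseSubsets_add_two (y : ℝ) (k : ℕ) :
    ∑ b ∈ sparseSubsets (k + 2), y ^ b.card =
      ∑ b ∈ sparseSubsets (k + 1), y ^ b.card + y * ∑ b ∈ sparseSubsets k, y ^ b.card := by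
  have hlast {j : ℕ} {b : Finset ℕ} (hb : b ∈ sparseSubsets j) (hj : j ≤ k + 1) : k + 1 ∉ b :=
    fun h => by have := (mem_sparseSubsets.mp hb).1 _ h; omega
  rw [sparseSubsets_add_two, Finset.sum_union, Finset.sum_image, Finset.mul_sum]
  · congr 1
    refine Finset.sum_congr rfl fun b hb => ?_
    rw [Finset.card_insert_of_notMem (hlast hb (by omega)), pow_succ']
  · intro a ha b hb hab
    rw [← Finset.erase_insert (hlast ha (by omega)), hab, Finset.erase_insert (hlast hb (by omega))]
  · rw [Finset.disjoint_right]
    intro b hb hb'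
    obtain ⟨a, -, rfl⟩ := Finset.mem_image.mp hb
    exact hlast hb' le_rfl (Finset.mem_insert_self _ _)

-- `lam` is the larger root of `z ^ 2 = z + y` for `y = lam ^ 2 - lam`.
theorem sum_sparseSubsets_le {lam : ℝ} (hlam : 1 ≤ lam) (k : ℕ) :
    ∑ b ∈ sparseSubsets k, (lam ^ 2 - lam) ^ b.card ≤ lam ^ (k + 1) := by
  have hy : 0 ≤ lam ^ 2 - lam := by nlinarith
  induction k using Nat.twoStepInduction with
  | zero =>
    rw [show sparseSubsets 0 = {∅} from rfl, Finset.sum_singleton]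
    simpa using hlam
  | one =>
    rw [show sparseSubsets 1 = {∅, {0}} from rfl, Finset.sum_pair (by decide)]
    norm_num
    linarith
  | more k ih₀ ih₁ =>
    calc _ = _ := sum_sparseSubsets_add_two _ k
      _ ≤ lam ^ (k + 1 + 1) + (lam ^ 2 - lam) * lam ^ (k + 1) := by gcongr
      _ = _ := by ring

variable (k : ℕ) [NeZero k]

/-- The nonempty subsets of `Fin k` without two cyclically consecutive elements: the possible sets
of gaps along a cycle. -/
def gapPatterns : Finset (Finset (Fin k)) :=
  {b | b.Nonempty ∧ ∀ i ∈ b, i + 1 ∉ b}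

variable {k}

theorem mem_gapPatterns {b : Finset (Fin k)} :
    b ∈ gapPatterns k ↔ b.Nonempty ∧ ∀ i ∈ b, i + 1 ∉ b := by
  simp only [gapPatterns, Finset.mem_filter_univ]

theorem map_valEmbedding_mem_sparseSubsets {b : Finset (Fin k)} (hb : b ∈ gapPatterns k) :
    b.map Fin.valEmbedding ∈ sparseSubsets k := by
  simp only [mem_sparseSubsets, Finset.mem_map, Fin.valEmbedding_apply, forall_exists_index,
    and_imp]
  refine ⟨fun _ i _ hi => hi ▸ i.is_lt, ?_⟩
  rintro _ i hi rfl ⟨j, hj, hij⟩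
  have hsucc : i + 1 = j := by
    apply Fin.ext
    rw [Fin.val_add_one_of_lt' (hij ▸ j.is_lt), hij]
  exact (mem_gapPatterns.mp hb).2 i hi (hsucc ▸ hj)

variable (k) in
theorem sum_gapPatterns_le {lam : ℝ} (hlam : 1 ≤ lam) :
    ∑ b ∈ gapPatterns k, (lam ^ 2 - lam) ^ b.card ≤ lam ^ (k + 1) := by
  have hy : 0 ≤ lam ^ 2 - lam := by nlinarith
  calc ∑ b ∈ gapPatterns k, (lam ^ 2 - lam) ^ b.card
      = ∑ b ∈ (gapPatterns k).map (Finset.mapEmbedding Fin.valEmbedding).toEmbedding,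
          (lam ^ 2 - lam) ^ b.card := by
        rw [Finset.sum_map]
        exact Finset.sum_congr rfl fun b _ => by
          rw [RelEmbedding.coe_toEmbedding, Finset.mapEmbedding_apply, Finset.card_map]
    _ ≤ ∑ b ∈ sparseSubsets k, (lam ^ 2 - lam) ^ b.card := by
        refine Finset.sum_le_sum_of_subset_of_nonneg ?_ fun _ _ _ => by positivity
        intro a ha
        obtain ⟨b, hb, rfl⟩ := Finset.mem_map.mp ha
        exact map_valEmbedding_mem_sparseSubsets hb
    _ ≤ lam ^ (k + 1) := sum_sparseSubsets_le hlam k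

/-- The contribution of one cycle to the `p + 1`-st moment of `NS k`, when a system of `m` paths is
weighted by `x ^ m`. -/
noncomputable def gapWeight (k p : ℕ) [NeZero k] (x : ℝ) : ℝ :=
  ∑ b ∈ gapPatterns k, x ^ b.card * ((k : ℝ) / b.card) ^ p

theorem gapWeight_nonneg (p : ℕ) {x : ℝ} (hx : 0 ≤ x) : 0 ≤ gapWeight k p x :=
  Finset.sum_nonneg fun _ _ => by positivity

-- The first summand dominates when `k ≤ 20 * b`. Otherwise replacing `x` by `0.24` costs at most
-- `11 ^ b ≤ (1.13 ^ 20) ^ b ≤ 1.13 ^ k`.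
theorem pow_mul_div_pow_le {x : ℝ} (hx0 : 0 ≤ x) (hx : x ≤ 11 * 0.24) {b k p : ℕ} (hb : 1 ≤ b)
    (hp : (k : ℝ) ^ p ≤ 1.3 ^ k) :
    x ^ b * ((k : ℝ) / b) ^ p ≤ 20 ^ p * x ^ b + 1.3 ^ k * 1.13 ^ k * 0.24 ^ b := by
  have hb1 : (1 : ℝ) ≤ b := by exact_mod_cast hb
  by_cases hkb : k ≤ 20 * b
  · have hdiv : (k : ℝ) / b ≤ 20 := by
      rw [div_le_iff₀ (by linarith)]
      exact_mod_cast hkb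
    calc x ^ b * ((k : ℝ) / b) ^ p ≤ x ^ b * 20 ^ p := by gcongr
      _ = 20 ^ p * x ^ b := mul_comm _ _
      _ ≤ _ := le_add_of_nonneg_right (by positivity)
  · have hpow : (11 : ℝ) ^ b ≤ 1.13 ^ k :=
      calc (11 : ℝ) ^ b ≤ (1.13 ^ 20) ^ b := by gcongr; norm_num
        _ = 1.13 ^ (20 * b) := (pow_mul _ _ _).symm
        _ ≤ 1.13 ^ k := by gcongr <;> [norm_num; omega]
    have hdiv : (k : ℝ) / b ≤ k := div_le_self (by positivity) hb1
    calc x ^ b * ((k : ℝ) / b) ^ p ≤ (11 * 0.24) ^ b * (k : ℝ) ^ p := by gcongr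
      _ = 11 ^ b * 0.24 ^ b * (k : ℝ) ^ p := by rw [mul_pow]
      _ ≤ 1.13 ^ k * 0.24 ^ b * 1.3 ^ k := by gcongr
      _ = 1.3 ^ k * 1.13 ^ k * 0.24 ^ b := by ring
      _ ≤ _ := le_add_of_nonneg_left (by positivity)

theorem gapWeight_le {lam : ℝ} (hlo : 1.8 ≤ lam) (hhi : lam ≤ 2.2) {p : ℕ}
    (hp : (k : ℝ) ^ p ≤ 1.3 ^ k) :
    gapWeight k p (lam ^ 2 - lam) ≤ 2 * 20 ^ p * lam ^ (k + 1) := by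
  set x := lam ^ 2 - lam with hx
  have hx0 : 0 ≤ x := by rw [hx]; nlinarith
  have hterm : ∀ b ∈ gapPatterns k, x ^ b.card * ((k : ℝ) / b.card) ^ p ≤
      20 ^ p * x ^ b.card + 1.3 ^ k * 1.13 ^ k * 0.24 ^ b.card := fun b hb =>
    pow_mul_div_pow_le hx0 (by nlinarith) (mem_gapPatterns.mp hb).1.card_pos hp
  have hmain : ∑ b ∈ gapPatterns k, x ^ b.card ≤ lam ^ (k + 1) :=
    sum_gapPatterns_le k (by linarith)
  have hsmall : ∑ b ∈ gapPatterns k, (0.24 : ℝ) ^ b.card ≤ 1.2 ^ (k + 1) := by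
    rw [show (0.24 : ℝ) = 1.2 ^ 2 - 1.2 by norm_num]
    exact sum_gapPatterns_le k (by norm_num)
  have hbase : (1.3 * 1.13 * 1.2 : ℝ) ^ k * 1.2 ≤ lam ^ k * lam := by
    have : 0 ≤ lam := by linarith
    gcongr <;> linarith
  have h20 : (1 : ℝ) ≤ 20 ^ p := one_le_pow₀ (by norm_num)
  calc gapWeight k p x
      ≤ 20 ^ p * ∑ b ∈ gapPatterns k, x ^ b.card +
          1.3 ^ k * 1.13 ^ k * ∑ b ∈ gapPatterns k, (0.24 : ℝ) ^ b.card := by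
        rw [Finset.mul_sum, Finset.mul_sum, ← Finset.sum_add_distrib]
        exact Finset.sum_le_sum hterm
    _ ≤ 20 ^ p * lam ^ (k + 1) + 1.3 ^ k * 1.13 ^ k * 1.2 ^ (k + 1) := by gcongr
    _ = 20 ^ p * lam ^ (k + 1) + (1.3 * 1.13 * 1.2) ^ k * 1.2 := by
        rw [mul_pow, mul_pow]; ring
    _ ≤ 20 ^ p * lam ^ (k + 1) + 20 ^ p * (lam ^ k * lam) :=
        add_le_add le_rfl (hbase.trans (le_mul_of_one_le_left (by positivity) h20))
    _ = 2 * 20 ^ p * lam ^ (k + 1) := by ring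

end SparseSets

section Moments

theorem card_pow_succ_le {ι : Type*} (s : Finset ι) {w : ι → ℝ} (hw : ∀ i ∈ s, 0 < w i) (p : ℕ) :
    (s.card : ℝ) ^ (p + 1) ≤ (∑ i ∈ s, w i) ^ p * ∑ i ∈ s, (w i)⁻¹ ^ p := by
  rcases s.eq_empty_or_nonempty with rfl | hne
  · simp
  set W := ∑ i ∈ s, w i
  have hW0 : 0 < W := Finset.sum_pos hw hne
  have hmean : ∑ i ∈ s, w i / W * (w i)⁻¹ = s.card / W := by
    rw [Finset.cast_card, Finset.sum_div]
    refine Finset.sum_congr rfl fun i hi => ?_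
    rw [div_mul_eq_mul_div, mul_inv_cancel₀ (hw i hi).ne']
  have hpow : ∑ i ∈ s, w i / W * (w i)⁻¹ ^ (p + 1) = (∑ i ∈ s, (w i)⁻¹ ^ p) / W := by
    rw [Finset.sum_div]
    refine Finset.sum_congr rfl fun i hi => ?_
    rw [pow_succ', div_mul_eq_mul_div, mul_inv_cancel_left₀ (hw i hi).ne']
  have hjensen : ((s.card : ℝ) / W) ^ (p + 1) ≤ (∑ i ∈ s, (w i)⁻¹ ^ p) / W := by
    rw [← hmean, ← hpow]
    exact Real.pow_arith_mean_le_arith_mean_pow s _ _ (fun i hi => (div_pos (hw i hi) hW0).le)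
      (by rw [← Finset.sum_div, div_self hW0.ne']) (fun i hi => (inv_pos.mpr (hw i hi)).le) _
  calc (s.card : ℝ) ^ (p + 1) = (s.card / W) ^ (p + 1) * W ^ (p + 1) := by
        rw [← mul_pow, div_mul_cancel₀ _ hW0.ne']
    _ ≤ (∑ i ∈ s, (w i)⁻¹ ^ p) / W * W ^ (p + 1) := by gcongr
    _ = W ^ p * ∑ i ∈ s, (w i)⁻¹ ^ p := by rw [pow_succ]; field_simp

variable {n m k : ℕ} {S : SimpleGraph (Fin n)}

namespace PathsGraph

theorem exists_adj (hS : PathsGraph S m) (u : Fin n) : ∃ v, S.Adj u v :=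
  (hS.2 (S.connectedComponentMk u)).exists_adj rfl

theorem exists_leaf (hS : PathsGraph S m) (C : S.ConnectedComponent) :
    ∃ u ∈ C.supp, (S.neighborSet u).Subsingleton :=
  (hS.2 C).exists_leaf

end PathsGraph

open Classical in
/-- The set `I_{0,m}` of systems of `m` paths. -/
noncomputable def pathsGraphs (n m : ℕ) : Finset (SimpleGraph (Fin n)) :=
  {S | PathsGraph S m}

theorem mem_pathsGraphs : S ∈ pathsGraphs n m ↔ PathsGraph S m := by
  simp only [pathsGraphs, Finset.mem_filter_univ]

variable (n m) in
theorem card_pathsGraphs :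
    (pathsGraphs n m).card = Nat.card {S : SimpleGraph (Fin n) // PathsGraph S m} :=
  (Nat.subtype_card _ fun _ => mem_pathsGraphs).symm

variable [NeZero k]

theorem RODContains.gap_mem_gapPatterns {F : RODFactor n k} (hF : RODContains F S) (hk : 3 ≤ k)
    (hS : PathsGraph S m) (c : Fin (n / k)) : F.gap S c ∈ gapPatterns k :=
  mem_gapPatterns.mpr ⟨hF.gap_nonempty hk hS.exists_leaf c,
    fun _ hi => hF.add_one_notMem_gap hS.exists_adj hi⟩

open Classical in
-- Hölder with the weights `∏ c, |gap c| / k`, whose sum over `F` is at most `m! * 2 ^ m`.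
theorem NS_pow_succ_le (hkn : k ∣ n) (hk : 3 ≤ k) (hS : PathsGraph S m) (p : ℕ) :
    (NS k S : ℝ) ^ (p + 1) ≤ ((m.factorial : ℝ) * 2 ^ m) ^ p *
      ∑ F : RODFactor n k with RODContains F S, ∏ c, ((k : ℝ) / (F.gap S c).card) ^ p := by
  have hk0 : (0 : ℝ) < k := Nat.cast_pos.mpr (by omega)
  have hNS : NS k S = ({F : RODFactor n k | RODContains F S} : Finset _).card :=
    (Nat.card_eq_fintype_card).trans (Fintype.card_subtype _)
  have hpos : ∀ F ∈ ({F : RODFactor n k | RODContains F S} : Finset _),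
      0 < ∏ c, ((F.gap S c).card / k : ℝ) := fun F hF =>
    Finset.prod_pos fun c _ => div_pos (Nat.cast_pos.mpr
      ((Finset.mem_filter_univ F).mp hF |>.gap_nonempty hk hS.exists_leaf c).card_pos) hk0
  have hsum : ∑ F : RODFactor n k with RODContains F S, ∏ c, ((F.gap S c).card / k : ℝ) ≤
      m.factorial * 2 ^ m := by
    simp only [Finset.prod_div_distrib, ← Finset.sum_div, Finset.prod_const, Finset.card_univ,
      Fintype.card_fin]
    rw [div_le_iff₀' (by positivity)]
    have := sum_prod_card_gap_le hkn S
    rw [hS.1] at this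
    exact_mod_cast this
  have hinv (F : RODFactor n k) : (∏ c, ((F.gap S c).card / k : ℝ))⁻¹ ^ p =
      ∏ c, ((k : ℝ) / (F.gap S c).card) ^ p := by
    rw [← Finset.prod_inv_distrib, Finset.prod_pow]
    simp only [inv_div]
  rw [hNS]
  refine (card_pow_succ_le _ hpos p).trans ?_
  simp only [hinv]
  gcongr

open Classical in
-- The gaps determine the path system, and each path ends in a gap.
theorem sum_prod_div_card_gap_le (hk : 3 ≤ k) (F : RODFactor n k) (p : ℕ) {x : ℝ} (hx : 1 ≤ x) :
    ∑ S ∈ pathsGraphs n m with RODContains F S, ∏ c, ((k : ℝ) / (F.gap S c).card) ^ p ≤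
      gapWeight k p x ^ (n / k) / x ^ m := by
  let weight (b : Finset (Fin k)) : ℝ := x ^ b.card * ((k : ℝ) / b.card) ^ p
  have hcard {S} (hS : PathsGraph S m) : x ^ m ≤ ∏ c, x ^ (F.gap S c).card := by
    rw [Finset.prod_pow_eq_pow_sum]
    exact pow_le_pow_right₀ hx <|
      hS.1 ▸ F.card_connectedComponent_le_sum_card_gap hk hS.exists_leaf
  rw [le_div_iff₀' (by positivity), Finset.mul_sum]
  calc ∑ S ∈ pathsGraphs n m with RODContains F S, x ^ m * ∏ c, ((k : ℝ) / (F.gap S c).card) ^ p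
      ≤ ∑ S ∈ pathsGraphs n m with RODContains F S, ∏ c, weight (F.gap S c) := by
        refine Finset.sum_le_sum fun S hS => ?_
        have hS := mem_pathsGraphs.mp (Finset.mem_filter.mp hS).1
        rw [Finset.prod_mul_distrib]
        gcongr
        exact hcard hS
    _ = ∑ β ∈ ({S ∈ pathsGraphs n m | RODContains F S} : Finset _).image F.gap,
          ∏ c, weight (β c) := by
        rw [Finset.sum_image]
        exact fun S hS T hT h =>
          (Finset.mem_filter.mp hS).2.eq_of_gap_eq (Finset.mem_filter.mp hT).2 h
    _ ≤ ∑ β ∈ Fintype.piFinset fun _ : Fin (n / k) => gapPatterns k, ∏ c, weight (β c) := by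
        refine Finset.sum_le_sum_of_subset_of_nonneg ?_ fun _ _ _ => by positivity
        refine Finset.image_subset_iff.mpr fun S hS => Fintype.mem_piFinset.mpr fun c => ?_
        obtain ⟨hS, hF⟩ := Finset.mem_filter.mp hS
        exact hF.gap_mem_gapPatterns hk (mem_pathsGraphs.mp hS) c
    _ = gapWeight k p x ^ (n / k) := by
        rw [← Finset.prod_univ_sum, Finset.prod_const, Finset.card_univ, Fintype.card_fin]
        rfl

theorem sum_NS_pow_succ_le (hkn : k ∣ n) (hk : 3 ≤ k) (p : ℕ) {x : ℝ} (hx : 1 ≤ x) :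
    ∑ S ∈ pathsGraphs n m, (NS k S : ℝ) ^ (p + 1) ≤
      ((m.factorial : ℝ) * 2 ^ m) ^ p *
        (n.factorial * (gapWeight k p x ^ (n / k) / x ^ m)) := by
  classical
  calc ∑ S ∈ pathsGraphs n m, (NS k S : ℝ) ^ (p + 1)
      ≤ ∑ S ∈ pathsGraphs n m, ((m.factorial : ℝ) * 2 ^ m) ^ p *
          ∑ F : RODFactor n k with RODContains F S, ∏ c, ((k : ℝ) / (F.gap S c).card) ^ p :=
        Finset.sum_le_sum fun S hS => NS_pow_succ_le hkn hk (mem_pathsGraphs.mp hS) p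
    _ = ((m.factorial : ℝ) * 2 ^ m) ^ p * ∑ F : RODFactor n k,
          ∑ S ∈ pathsGraphs n m with RODContains F S, ∏ c, ((k : ℝ) / (F.gap S c).card) ^ p := by
        rw [← Finset.mul_sum]
        congr 1
        exact Finset.sum_comm' fun _ _ => by
          simp only [Finset.mem_univ, Finset.mem_filter, true_and, and_true]
    _ ≤ ((m.factorial : ℝ) * 2 ^ m) ^ p *
          ∑ _F : RODFactor n k, gapWeight k p x ^ (n / k) / x ^ m := by
        gcongr with F
        exact sum_prod_div_card_gap_le hk F p hx
    _ = _ := by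
        rw [Finset.sum_const, Finset.card_univ, RODFactor.card_eq_factorial hkn, nsmul_eq_mul]

end Moments

section BinomialMode

theorem factorial_mul_pow_le_factorial_mul_pow (j m : ℕ) :
    m.factorial * m ^ j ≤ j.factorial * m ^ m := by
  obtain ⟨d, rfl⟩ | ⟨d, rfl⟩ := (le_total m j).imp Nat.exists_eq_add_of_le Nat.exists_eq_add_of_le
  · have := Nat.factorial_mul_pow_sub_le_factorial (Nat.le_add_right m d)
    rw [Nat.add_sub_cancel_left] at this
    calc m.factorial * m ^ (m + d) = m.factorial * m ^ d * m ^ m := by ring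
      _ ≤ (m + d).factorial * m ^ m := by gcongr
  · have : (j + d).factorial ≤ j.factorial * (j + d) ^ d := by
      rw [← Nat.factorial_mul_ascFactorial]
      exact Nat.mul_le_mul_left _ (Nat.ascFactorial_le_pow_add j d)
    calc (j + d).factorial * (j + d) ^ j ≤ j.factorial * (j + d) ^ d * (j + d) ^ j := by gcongr
      _ = j.factorial * (j + d) ^ (j + d) := by ring

theorem choose_mul_pow_mul_pow_le {i j m t : ℕ} (h : j + i = m + t) :
    (m + t).choose j * m ^ j * t ^ i ≤ (m + t).choose m * m ^ m * t ^ t := by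
  have hfact (a b : ℕ) : (a + b).choose a * a.factorial * b.factorial = (a + b).factorial := by
    rw [Nat.choose_symm_add, Nat.add_choose_mul_factorial_mul_factorial]
  have hpos : 0 < j.factorial * i.factorial * (m.factorial * t.factorial) := by positivity
  refine Nat.le_of_mul_le_mul_left ?_ hpos
  calc j.factorial * i.factorial * (m.factorial * t.factorial) *
        ((m + t).choose j * m ^ j * t ^ i)
      = (m + t).choose j * j.factorial * i.factorial *
          (m.factorial * m ^ j * (t.factorial * t ^ i)) := by ring
    _ ≤ (m + t).choose m * m.factorial * t.factorial *
          (j.factorial * m ^ m * (i.factorial * t ^ t)) := by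
        rw [hfact m t, ← h, hfact j i]
        gcongr _ * (?_ * ?_) <;> apply factorial_mul_pow_le_factorial_mul_pow
    _ = j.factorial * i.factorial * (m.factorial * t.factorial) *
          ((m + t).choose m * m ^ m * t ^ t) := by ring

theorem add_pow_le_mul_choose_mul_pow_mul_pow (m t : ℕ) :
    (m + t) ^ (m + t) ≤ (m + t + 1) * ((m + t).choose m * m ^ m * t ^ t) := by
  rw [add_pow]
  refine (Finset.sum_le_card_nsmul _ _ _ fun j hj => ?_).trans_eq
    (by rw [Finset.card_range, smul_eq_mul])
  have hj : j ≤ m + t := Nat.lt_succ_iff.mp (Finset.mem_range.mp hj)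
  calc m ^ j * t ^ (m + t - j) * (m + t).choose j
      = (m + t).choose j * m ^ j * t ^ (m + t - j) := by ring
    _ ≤ _ := choose_mul_pow_mul_pow_le (Nat.add_sub_cancel' hj)

theorem choose_le_add_mul_multichoose {m : ℕ} (hm : 0 < m) (t : ℕ) :
    (m + t).choose m ≤ (m + t) * m.multichoose t := by
  obtain ⟨d, rfl⟩ := Nat.exists_eq_add_of_le' hm
  have h := Nat.add_one_mul_choose_eq (d + t) d
  calc (d + 1 + t).choose (d + 1) ≤ (d + 1 + t).choose (d + 1) * (d + 1) :=
        Nat.le_mul_of_pos_right _ hm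
    _ = (d + t + 1) * (d + t).choose d := by rw [h, add_right_comm]
    _ = (d + 1 + t) * (d + 1).multichoose t := by
        rw [Nat.multichoose_eq, add_right_comm d 1 t, Nat.add_sub_cancel, Nat.choose_symm_add]

theorem add_pow_le_sq_mul_multichoose {m : ℕ} (hm : 0 < m) (t : ℕ) :
    (m + t) ^ (m + t) ≤ (2 * m + t) ^ 2 * (m.multichoose t * m ^ m * t ^ t) :=
  calc (m + t) ^ (m + t) ≤ (m + t + 1) * ((m + t).choose m * m ^ m * t ^ t) :=
        add_pow_le_mul_choose_mul_pow_mul_pow m t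
    _ ≤ (m + t + 1) * ((m + t) * m.multichoose t * m ^ m * t ^ t) := by
        gcongr
        exact choose_le_add_mul_multichoose hm t
    _ = (m + t + 1) * (m + t) * (m.multichoose t * m ^ m * t ^ t) := by ring
    _ ≤ (2 * m + t) ^ 2 * (m.multichoose t * m ^ m * t ^ t) := by
        rw [sq (2 * m + t)]
        gcongr ?_ * ?_ * _ <;> omega

-- With `x = lam ^ 2 - lam`, the maximum over `m` of `multichoose m t * x ^ m` subject to
-- `2 * m + t = n` is about `lam ^ n`, attained at `lam = (m + t) / t`.
theorem pow_le_sq_mul_multichoose_mul_pow {m t : ℕ} (hm : 0 < m) (ht : 0 < t) {lam : ℝ}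
    (hlam : lam = (m + t) / t) :
    lam ^ (2 * m + t) ≤ (2 * m + t) ^ 2 * m.multichoose t * (lam ^ 2 - lam) ^ m := by
  have : (0 : ℝ) < t := Nat.cast_pos.mpr ht
  have hx : lam ^ 2 - lam = (m + t) * m / t ^ 2 := by rw [hlam]; field_simp; ring
  have hmode : ((m : ℝ) + t) ^ (m + t) ≤
      (2 * m + t) ^ 2 * (m.multichoose t * m ^ m * t ^ t) := by
    exact_mod_cast add_pow_le_sq_mul_multichoose hm t
  rw [hx]
  calc lam ^ (2 * m + t) = (m + t) ^ (m + t) * (m + t) ^ m / (t ^ t * t ^ (2 * m)) := by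
        rw [hlam, div_pow, ← pow_add, ← pow_add, two_mul, add_right_comm, ← add_assoc,
          add_comm t]
    _ ≤ (2 * m + t) ^ 2 * (m.multichoose t * m ^ m * t ^ t) * (m + t) ^ m /
          (t ^ t * t ^ (2 * m)) := by gcongr
    _ = (2 * m + t) ^ 2 * m.multichoose t * ((m + t) * m / t ^ 2) ^ m := by
        rw [div_pow, mul_pow, ← pow_mul]
        field_simp

end BinomialMode

section MomentBound

variable {n k m t p : ℕ}

theorem exists_eq_two_mul_add_of_abs_le (hn : 0 < n) (h : |(m : ℝ) / n - 1 / 3| ≤ 1 / 100) :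
    ∃ t : ℕ, n = 2 * m + t ∧ 0 < t ∧ (0.8 * t : ℝ) ≤ m ∧ (m : ℝ) ≤ 1.2 * t := by
  have hn0 : (0 : ℝ) < n := Nat.cast_pos.mpr hn
  have hlo : (1 / 3 - 1 / 100) * (n : ℝ) ≤ m := by
    rw [← le_div_iff₀ hn0]; linarith [(abs_le.mp h).1]
  have hhi : (m : ℝ) ≤ (1 / 3 + 1 / 100) * n := by
    rw [← div_le_iff₀ hn0]; linarith [(abs_le.mp h).2]
  have hlt : 2 * m < n := by
    rify
    linarith
  obtain ⟨t, rfl⟩ := Nat.exists_eq_add_of_le hlt.le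
  push_cast at hlo hhi
  exact ⟨t, rfl, by omega, by linarith, by linarith⟩

theorem gapWeight_pow_le [NeZero k] (hkn : k ∣ n) {lam : ℝ} (hlo : 1.8 ≤ lam) (hhi : lam ≤ 2.2)
    (hp : (k : ℝ) ^ p ≤ 1.3 ^ k) :
    gapWeight k p (lam ^ 2 - lam) ^ (n / k) ≤ (6 * 20 ^ p) ^ (n / k) * lam ^ n := by
  have : 0 ≤ lam := by linarith
  calc gapWeight k p (lam ^ 2 - lam) ^ (n / k) ≤ (2 * 20 ^ p * lam ^ (k + 1)) ^ (n / k) :=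
        pow_le_pow_left₀ (gapWeight_nonneg p (by nlinarith)) (gapWeight_le hlo hhi hp) _
    _ = (2 * lam * 20 ^ p * lam ^ k) ^ (n / k) := by ring
    _ ≤ (6 * 20 ^ p * lam ^ k) ^ (n / k) := by
        gcongr
        linarith
    _ = (6 * 20 ^ p) ^ (n / k) * lam ^ n := by rw [mul_pow, ← pow_mul, Nat.mul_div_cancel' hkn]

theorem sum_NS_pow_succ_le_card_mul (hkn : k ∣ n) (hk : 3 ≤ k) (hn : n = 2 * m + t) (ht : 0 < t)
    (hlo : (0.8 * t : ℝ) ≤ m) (hhi : (m : ℝ) ≤ 1.2 * t) (hp : (k : ℝ) ^ p ≤ 1.3 ^ k) :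
    ∑ S ∈ pathsGraphs n m, (NS k S : ℝ) ^ (p + 1) ≤
      ((m.factorial : ℝ) * 2 ^ m) ^ (p + 1) * (pathsGraphs n m).card *
        ((n : ℝ) ^ 2 * (6 * 20 ^ p) ^ (n / k)) := by
  have : NeZero k := ⟨by omega⟩
  have ht0 : (0 : ℝ) < t := Nat.cast_pos.mpr ht
  have hm : 0 < m := Nat.cast_pos.mp (hlo.trans_lt' (by positivity) : (0 : ℝ) < m)
  set M : ℝ := m.factorial * 2 ^ m with hM
  obtain ⟨lam, hlam⟩ : ∃ lam : ℝ, lam = (m + t) / t := ⟨_, rfl⟩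
  have hlam_lo : 1.8 ≤ lam := by rw [hlam, le_div_iff₀ ht0]; linarith
  have hlam_hi : lam ≤ 2.2 := by rw [hlam, div_le_iff₀ ht0]; linarith
  have hx : 1 ≤ lam ^ 2 - lam := by nlinarith
  have hlam_pow : lam ^ n ≤ (n : ℝ) ^ 2 * m.multichoose t * (lam ^ 2 - lam) ^ m := by
    rw [hn]
    exact_mod_cast pow_le_sq_mul_multichoose_mul_pow hm ht hlam
  have hcard : (m.multichoose t : ℝ) * n.factorial ≤ (pathsGraphs n m).card * M := by
    rw [card_pathsGraphs, hM]
    exact_mod_cast multichoose_mul_factorial_le hn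
  have hweight : gapWeight k p (lam ^ 2 - lam) ^ (n / k) / (lam ^ 2 - lam) ^ m ≤
      (6 * 20 ^ p) ^ (n / k) * (n ^ 2 * m.multichoose t) := by
    rw [div_le_iff₀ (by positivity), mul_assoc]
    exact (gapWeight_pow_le hkn hlam_lo hlam_hi hp).trans (by gcongr)
  calc ∑ S ∈ pathsGraphs n m, (NS k S : ℝ) ^ (p + 1)
      ≤ M ^ p * (n.factorial *
          (gapWeight k p (lam ^ 2 - lam) ^ (n / k) / (lam ^ 2 - lam) ^ m)) :=
        sum_NS_pow_succ_le hkn hk p hx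
    _ ≤ M ^ p * (n.factorial * ((6 * 20 ^ p) ^ (n / k) * (n ^ 2 * m.multichoose t))) := by gcongr
    _ = M ^ p * (m.multichoose t * n.factorial * (n ^ 2 * (6 * 20 ^ p) ^ (n / k))) := by ring
    _ ≤ M ^ p * ((pathsGraphs n m).card * M * (n ^ 2 * (6 * 20 ^ p) ^ (n / k))) := by gcongr
    _ = _ := by ring

end MomentBound

section Truncation

theorem sum_pow_filter_lt_mul_pow_le {ι : Type*} (s : Finset ι) {f : ι → ℝ}
    (hf : ∀ i ∈ s, 0 ≤ f i) {T : ℝ} (hT : 0 ≤ T) (a b : ℕ) :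
    (∑ i ∈ s with T < f i, f i ^ a) * T ^ b ≤ ∑ i ∈ s, f i ^ (a + b) := by
  rw [Finset.sum_mul]
  refine (Finset.sum_le_sum fun i hi => ?_).trans <| Finset.sum_le_sum_of_subset_of_nonneg
    (Finset.filter_subset _ s) fun i hi _ => pow_nonneg (hf i hi) _
  obtain ⟨hi, hlt⟩ := Finset.mem_filter.mp hi
  have := hf i hi
  rw [pow_add]
  gcongr

theorem sum_sq_filter_lt_le {ι : Type*} (s : Finset ι) {f : ι → ℝ} (hf : ∀ i ∈ s, 0 ≤ f i)
    {ε C L M N : ℝ} (hL : 0 < L) (hM : 0 < M) (hN : 0 ≤ N) {q : ℕ}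
    (hmoment : ∑ i ∈ s, f i ^ (2 + q) ≤ M ^ (2 + q) * N * C) (hC : C ≤ ε * L ^ q) :
    ∑ i ∈ s with L * M < f i, f i ^ 2 ≤ ε * M ^ 2 * N := by
  refine le_of_mul_le_mul_right ?_ (show 0 < (L * M) ^ q by positivity)
  calc (∑ i ∈ s with L * M < f i, f i ^ 2) * (L * M) ^ q ≤ ∑ i ∈ s, f i ^ (2 + q) :=
        sum_pow_filter_lt_mul_pow_le s hf (by positivity) 2 q
    _ ≤ M ^ (2 + q) * N * (ε * L ^ q) := hmoment.trans (by gcongr)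
    _ = ε * M ^ 2 * N * (L * M) ^ q := by ring

theorem eventually_pow_sqrt_le {c : ℝ} (hc : 1 < c) :
    ∀ᶠ k : ℕ in Filter.atTop, (k : ℝ) ^ Nat.sqrt k ≤ c ^ k := by
  have hlog := ((isLittleO_log_rpow_atTop (one_half_pos (α := ℝ))).bound
    (Real.log_pos hc)).natCast_atTop
  filter_upwards [hlog, Filter.eventually_gt_atTop 0] with k hlog hk
  have hk0 : (0 : ℝ) < k := Nat.cast_pos.mpr hk
  rw [← Real.sqrt_eq_rpow, Real.norm_of_nonneg (Real.sqrt_nonneg _)] at hlog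
  rw [← Real.log_le_log_iff (by positivity) (by positivity), Real.log_pow, Real.log_pow]
  calc (Nat.sqrt k : ℝ) * Real.log k ≤ √k * (Real.log c * √k) := by
        gcongr
        · exact Real.nat_sqrt_le_real_sqrt
        · exact (le_abs_self _).trans hlog
    _ = √k * √k * Real.log c := by ring
    _ = k * Real.log c := by rw [Real.mul_self_sqrt hk0.le]

theorem eventually_sq_mul_exp_neg_le {ε : ℝ} (hε : 0 < ε) :
    ∀ᶠ n : ℕ in Filter.atTop, ∀ s : ℕ, n ≤ (2 * s) ^ 2 → (n : ℝ) ^ 2 * Real.exp (-s) ≤ ε := by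
  have hlim : Filter.Tendsto (fun n : ℕ => √(n : ℝ) / 2) Filter.atTop Filter.atTop :=
    (Real.tendsto_sqrt_atTop.comp tendsto_natCast_atTop_atTop).atTop_div_const two_pos
  filter_upwards [((Real.tendsto_pow_mul_exp_neg_atTop_nhds_zero 4).comp hlim).eventually_lt_const
    (show 0 < ε / 16 by positivity)] with n hn s hs
  have hsqrt : √(n : ℝ) / 2 ≤ s := by
    have : √(n : ℝ) ≤ 2 * s := Real.sqrt_le_iff.mpr ⟨by positivity, by exact_mod_cast hs⟩
    linarith
  have hsq : (n : ℝ) ^ 2 = 16 * (√(n : ℝ) / 2) ^ 4 := by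
    nth_rw 1 [← Real.sq_sqrt (Nat.cast_nonneg (α := ℝ) n)]
    ring
  calc (n : ℝ) ^ 2 * Real.exp (-s) ≤ n ^ 2 * Real.exp (-(√(n : ℝ) / 2)) := by gcongr
    _ = 16 * ((√(n : ℝ) / 2) ^ 4 * Real.exp (-(√(n : ℝ) / 2))) := by rw [hsq]; ring
    _ ≤ ε := by dsimp only [Function.comp_apply] at hn; linarith

theorem le_sq_of_dvd {n k : ℕ} (hn : 0 < n) (hk : 0 < k) (hkn : k ∣ n) :
    n ≤ (2 * (Nat.sqrt k * (n / k))) ^ 2 := by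
  obtain ⟨r, rfl⟩ := hkn
  have hr : 0 < r := Nat.pos_of_mul_pos_left hn
  have hsqrt : 1 ≤ Nat.sqrt k := Nat.sqrt_pos.mpr hk
  rw [Nat.mul_div_cancel_left r hk]
  calc k * r ≤ ((Nat.sqrt k + 1) * (Nat.sqrt k + 1)) * (r * r) :=
        Nat.mul_le_mul (Nat.lt_succ_sqrt k).le (Nat.le_mul_of_pos_left r hr)
    _ ≤ ((2 * Nat.sqrt k) * (2 * Nat.sqrt k)) * (r * r) := by gcongr <;> omega
    _ = (2 * (Nat.sqrt k * r)) ^ 2 := by ring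

theorem mul_pow_le_mul_pow {a ε L : ℝ} (ha : 0 ≤ a) (hL : 400 ≤ L) {q r : ℕ} (hq : 1 ≤ q)
    (h : a * Real.exp (-((q + 1) * r : ℕ)) ≤ ε) :
    a * (6 * 20 ^ (q + 1)) ^ r ≤ ε * (L ^ (3 * r)) ^ q := by
  have hε : 0 ≤ ε := h.trans' (by positivity)
  have hsix : (6 * 20 ^ (q + 1) : ℝ) ≤ 120 ^ (q + 1) := by
    rw [show (120 : ℝ) = 6 * 20 by norm_num, mul_pow]
    gcongr
    exact le_self_pow₀ (by norm_num) (by omega)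
  have hexp : 120 * Real.exp 1 ≤ L := by linarith [Real.exp_one_lt_three]
  calc a * (6 * 20 ^ (q + 1)) ^ r ≤ a * (120 ^ (q + 1)) ^ r := by gcongr
    _ = a * Real.exp (-((q + 1) * r : ℕ)) * (120 * Real.exp 1) ^ ((q + 1) * r) := by
        rw [← pow_mul, mul_pow, ← Real.exp_nat_mul, mul_one, Real.exp_neg]
        field_simp
    _ ≤ ε * L ^ ((q + 1) * r) := by gcongr
    _ ≤ ε * L ^ (3 * r * q) := by
        gcongr ε * ?_
        exact pow_le_pow_right₀ (by linarith) (by nlinarith)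
    _ = ε * (L ^ (3 * r)) ^ q := by rw [pow_mul]

theorem rpow_three_mul_div {n k : ℕ} (hk : k ≠ 0) (hkn : k ∣ n) (L : ℝ) :
    L ^ ((3 * n : ℝ) / k) = L ^ (3 * (n / k)) := by
  rw [← Real.rpow_natCast, Nat.cast_mul, Nat.cast_div hkn (Nat.cast_ne_zero.mpr hk), mul_div_assoc,
    Nat.cast_ofNat]

theorem tsum_exceptional_eq_sum (n m k : ℕ) (T : ℝ) :
    ∑' S : {G : SimpleGraph (Fin n) // PathsGraph G m ∧ T < NS k G}, (NS k S.1 : ℝ) ^ 2 =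
      ∑ S ∈ pathsGraphs n m with T < NS k S, (NS k S : ℝ) ^ 2 := by
  classical
  rw [tsum_fintype]
  have hmem (S) : S ∈ ({S ∈ pathsGraphs n m | T < NS k S} : Finset _) ↔
      PathsGraph S m ∧ T < NS k S := by
    rw [Finset.mem_filter, mem_pathsGraphs]
  exact (Finset.sum_subtype _ hmem fun S => (NS k S : ℝ) ^ 2).symm

end Truncation

/-- For every `ε > 0` there exist `θ > 0`, `K` and `N` such that for all `n ≥ N`, every
divisor `k ≥ K` of `n`, and every `m` with `|m/n − 1/3| ≤ θ`, the exceptional set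
`E = {S ∈ I_{0,m} : N(S) > (log k)^{3n/k}·m!·2^m}` satisfies
`Σ_{S ∈ E} N(S)² ≤ ε·(m!·2^m)²·|I_{0,m}|`. -/
theorem stmt14 (ε : ℝ) (hε : 0 < ε) :
    ∃ (θ : ℝ) (K N : ℕ), 0 < θ ∧
      ∀ n : ℕ, N ≤ n → ∀ k : ℕ, K ≤ k → k ∣ n →
        ∀ m : ℕ, |(m : ℝ) / n - 1 / 3| ≤ θ →
          ∑' S : {G : SimpleGraph (Fin n) // PathsGraph G m ∧
              (Real.log k) ^ ((3 * n : ℝ) / k) * (m.factorial : ℝ) * 2 ^ m < (NS k G : ℝ)},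
            (NS k S.1 : ℝ) ^ 2 ≤
          ε * ((m.factorial : ℝ) * 2 ^ m) ^ 2 *
            (Nat.card {G : SimpleGraph (Fin n) // PathsGraph G m} : ℝ) := by
  obtain ⟨K, hK⟩ := Filter.eventually_atTop.mp <| (Filter.eventually_ge_atTop 4).and <|
    (eventually_pow_sqrt_le (c := 1.3) (by norm_num)).and <|
      (Real.tendsto_log_atTop.comp tendsto_natCast_atTop_atTop).eventually_ge_atTop 400
  obtain ⟨N, hN⟩ := Filter.eventually_atTop.mp <|
    (Filter.eventually_gt_atTop 0).and (eventually_sq_mul_exp_neg_le hε)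
  refine ⟨1 / 100, K, N, by norm_num, fun n hn k hk hkn m hm => ?_⟩
  obtain ⟨hk4, hpow, hlog⟩ := hK k hk
  obtain ⟨hn0, hexp⟩ := hN n hn
  obtain ⟨t, hnt, ht, hlo, hhi⟩ := exists_eq_two_mul_add_of_abs_le hn0 hm
  obtain ⟨q, hq⟩ := Nat.exists_eq_add_of_le' (Nat.sqrt_pos.mpr (by omega : 0 < k))
  have hq1 : 1 ≤ q := by have : 2 ≤ Nat.sqrt k := Nat.le_sqrt.mpr hk4; omega
  have hdecay := hexp _ (le_sq_of_dvd hn0 (by omega) hkn)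
  rw [hq] at hpow hdecay
  have hmoment := sum_NS_pow_succ_le_card_mul hkn (by omega) hnt ht hlo hhi hpow
  rw [show q + 1 + 1 = 2 + q by ring] at hmoment
  simp only [rpow_three_mul_div (by omega : k ≠ 0) hkn, mul_assoc _ (m.factorial : ℝ),
    tsum_exceptional_eq_sum, ← card_pathsGraphs]
  exact sum_sq_filter_lt_le _ (fun _ _ => Nat.cast_nonneg _) (by positivity) (by positivity)
    (by positivity) hmoment (mul_pow_le_mul_pow (by positivity) hlog hq1 hdecay)
end

section
/- For even n, set Ψ₀(m) = M(n−2m)·n!·m!·2^m·C(n−m−1, m−1), where M(j) = (j−1)!! is the number of perfect matchings of j labelled points (M(0) = 1), and let J_n = {m ∈ ℤ : ⌈(1/3 − δ_n)n⌉ ≤ m ≤ ⌊(1/3 + δ_n)n⌋} with δ_n = (1/2)·(log n)^{−1/3}. Then, as n → ∞ through even integers, Σ_{m ∈ J_n} Ψ₀(m) / (√n · Ψ₀(⌊n/3⌋)) → (2/3)·√π. -/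
/-- `M(j) = (j−1)!!`, the number of perfect matchings of `j` labelled points
(with `M(0) = 1`). -/
def numMatchings (j : ℕ) : ℕ := Nat.doubleFactorial (j - 1)

/-- `Ψ₀(m) = M(n−2m)·n!·m!·2^m·C(n−m−1, m−1)`. -/
noncomputable def Psi0 (n m : ℕ) : ℝ :=
  (numMatchings (n - 2 * m) : ℝ) * (n.factorial : ℝ) * (m.factorial : ℝ) * 2 ^ m *
    ((n - m - 1).choose (m - 1) : ℝ)

/-- `J_n = {m : ⌈(1/3 − δ_n)n⌉ ≤ m ≤ ⌊(1/3 + δ_n)n⌋}` with `δ_n = (1/2)(log n)^{−1/3}`. -/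
noncomputable def Jn (n : ℕ) : Finset ℕ :=
  Finset.Icc ⌈((1 : ℝ) / 3 - (Real.log n) ^ (-(1 : ℝ) / 3) / 2) * n⌉₊
             ⌊((1 : ℝ) / 3 + (Real.log n) ^ (-(1 : ℝ) / 3) / 2) * n⌋₊

/-!
Write `k = ⌊n/3⌋`. The ratio of consecutive terms is
`Ψ₀(m+1)/Ψ₀(m) = 2(m+1)(n−2m)/(m(n−m−1))`, which is `1` to leading order at `m = n/3`; its logarithm
at `m = k + j` is `−(9/2)j/n + O(1/n + j²/n²)`. Telescoping away from `k` in both directions gives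
`Ψ₀(k+j)/Ψ₀(k) = exp(−(9/4)j²/n + O(|j|/n + |j|³/n²))`. The normalised sum is then the integral over
`t` of a step function whose value at `t` is the term with `j = ⌊t√n⌋`. As `n → ∞` the step
functions converge pointwise to `exp(−9t²/4)`, because `J_n` is wide on the scale `√n`, and they are
dominated by a Gaussian, because `J_n` is narrow on the scale `n`. So the limit is
`∫ exp(−9t²/4) dt = (2/3)√π`.
-/

open Filter Topology MeasureTheory

section FloorSums

variable {E : Type*} [NormedAddCommGroup E]

lemma map_floor_volume : (volume : Measure ℝ).map Int.floor = (Measure.count : Measure ℤ) := by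
  refine Measure.ext_of_singleton fun j => ?_
  rw [Measure.map_apply Int.measurable_floor (measurableSet_singleton j),
    Int.preimage_floor_singleton, Real.volume_Ico, Measure.count_singleton]
  simp only [add_sub_cancel_left, ENNReal.ofReal_one]

lemma aestronglyMeasurable_comp_floor_mul (f : ℤ → E) (s : ℝ) :
    AEStronglyMeasurable fun t : ℝ => f ⌊t * s⌋ :=
  ((StronglyMeasurable.of_discrete (f := f)).comp_measurable
    (Int.measurable_floor.comp (measurable_mul_const s))).aestronglyMeasurable

lemma integrable_comp_floor_mul_iff {f : ℤ → E} {s : ℝ} (hs : s ≠ 0) :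
    Integrable (fun t : ℝ => f ⌊t * s⌋) ↔ Summable fun j => ‖f j‖ := by
  rw [integrable_comp_mul_right_iff (fun x => f ⌊x⌋) hs, ← integrable_count_iff,
    ← map_floor_volume, integrable_map_measure StronglyMeasurable.of_discrete.aestronglyMeasurable
      Int.measurable_floor.aemeasurable]
  rfl

variable [NormedSpace ℝ E] [CompleteSpace E]

lemma integral_comp_floor_mul {f : ℤ → E} (hf : Summable fun j => ‖f j‖) (s : ℝ) :
    ∫ t : ℝ, f ⌊t * s⌋ = |s⁻¹| • ∑' j, f j := by
  rw [Measure.integral_comp_mul_right (fun x => f ⌊x⌋),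
    ← integral_map Int.measurable_floor.aemeasurable
      StronglyMeasurable.of_discrete.aestronglyMeasurable,
    map_floor_volume, integral_countable (integrable_count_iff.2 hf)]
  simp only [measureReal_def, Measure.count_singleton, ENNReal.toReal_one, one_smul]

theorem tendsto_inv_smul_tsum_of_dominated {ι : Type*} {l : Filter ι} [l.IsCountablyGenerated]
    {s : ι → ℝ} {f : ι → ℤ → E} {g : ℝ → E} {bound : ℝ → ℝ} (hs : ∀ᶠ i in l, 0 < s i)
    (hbound : Integrable bound) (hle : ∀ᶠ i in l, ∀ᵐ t, ‖f i ⌊t * s i⌋‖ ≤ bound t)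
    (hlim : ∀ᵐ t, Tendsto (fun i => f i ⌊t * s i⌋) l (𝓝 (g t))) :
    Tendsto (fun i => (s i)⁻¹ • ∑' j, f i j) l (𝓝 (∫ t, g t)) := by
  have hmeas i := aestronglyMeasurable_comp_floor_mul (f i) (s i)
  refine (tendsto_integral_filter_of_dominated_convergence bound (.of_forall hmeas) hle hbound
    hlim).congr' ?_
  filter_upwards [hs, hle] with i hsi hlei
  have hsum := (integrable_comp_floor_mul_iff hsi.ne').1 (hbound.mono' (hmeas i) hlei)
  rw [integral_comp_floor_mul hsum, abs_of_pos (inv_pos.2 hsi)]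

end FloorSums

lemma tendsto_floor_mul_div_atTop (t : ℝ) :
    Tendsto (fun s : ℝ => (⌊t * s⌋ : ℝ) / s) atTop (𝓝 t) := by
  have hlower : Tendsto (fun s : ℝ => t - s⁻¹) atTop (𝓝 t) := by
    simpa only [sub_zero] using tendsto_const_nhds.sub (tendsto_inv_atTop_zero (𝕜 := ℝ))
  refine tendsto_of_tendsto_of_tendsto_of_le_of_le' hlower tendsto_const_nhds ?_ ?_
  · filter_upwards [eventually_gt_atTop 0] with s hs
    rw [le_div_iff₀ hs, sub_mul, inv_mul_cancel₀ hs.ne']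
    exact (Int.sub_one_lt_floor _).le
  · filter_upwards [eventually_gt_atTop 0] with s hs
    exact (div_le_iff₀ hs).2 (Int.floor_le _)

lemma sq_le_two_mul_floor_mul_div_sq_add {s : ℝ} (hs : 1 ≤ s) (t : ℝ) :
    t ^ 2 ≤ 2 * (⌊t * s⌋ / s) ^ 2 + 2 := by
  have hs0 : 0 < s := zero_lt_one.trans_le hs
  have hlower : ⌊t * s⌋ / s ≤ t := (div_le_iff₀ hs0).2 (Int.floor_le _)
  have hupper : t ≤ ⌊t * s⌋ / s + 1 :=
    calc t ≤ (⌊t * s⌋ + 1) / s := (le_div_iff₀ hs0).2 (Int.lt_floor_add_one _).le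
      _ ≤ ⌊t * s⌋ / s + 1 := by rw [add_div]; gcongr; exact (div_le_one hs0).2 hs
  have hdist : (t - ⌊t * s⌋ / s) ^ 2 ≤ 1 := pow_le_one₀ (sub_nonneg.2 hlower) (by linarith)
  linarith [sq_nonneg (t - 2 * (⌊t * s⌋ / s))]

lemma mul_abs_add_abs_pow_three_div_le {a C s x : ℝ} (hs : 0 < s) (hx : |C| * |x| ≤ a / 2 * s) :
    C * (|x| + |x| ^ 3) / s ≤ a / 2 * (1 + x ^ 2) := by
  rw [div_le_iff₀ hs, ← sq_abs x]
  calc C * (|x| + |x| ^ 3) ≤ |C| * (|x| + |x| ^ 3) := by gcongr; exact le_abs_self C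
    _ = |C| * |x| * (1 + |x| ^ 2) := by ring
    _ ≤ a / 2 * s * (1 + |x| ^ 2) := by gcongr
    _ = a / 2 * (1 + |x| ^ 2) * s := by ring

section GaussianSums

variable {ι : Type*} {l : Filter ι} {s : ι → ℝ} {S : ι → Finset ℤ} {φ : ι → ℤ → ℝ} {a C : ℝ}

lemma tendsto_exp_floor_mul_of_abs_add_mul_sq_le (hs : Tendsto s l atTop)
    (hS : ∀ T : ℝ, ∀ᶠ i in l, ∀ j : ℤ, |(j : ℝ)| ≤ T * s i → j ∈ S i)
    (hφ : ∀ᶠ i in l, ∀ j ∈ S i,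
      |φ i j + a * (j / s i) ^ 2| ≤ C * (|j / s i| + |j / s i| ^ 3) / s i) (t : ℝ) :
    Tendsto (fun i => (S i : Set ℤ).indicator (fun j => Real.exp (φ i j)) ⌊t * s i⌋) l
      (𝓝 (Real.exp (-a * t ^ 2))) := by
  have hx : Tendsto (fun i => (⌊t * s i⌋ : ℝ) / s i) l (𝓝 t) :=
    (tendsto_floor_mul_div_atTop t).comp hs
  have hmem : ∀ᶠ i in l, ⌊t * s i⌋ ∈ S i := by
    filter_upwards [hS (|t| + 1), hs.eventually_gt_atTop 0,
      hx.abs.eventually_le_const (lt_add_one |t|)] with i hSi hsi hxi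
    refine hSi _ ?_
    rwa [abs_div, abs_of_pos hsi, div_le_iff₀ hsi] at hxi
  have herr : Tendsto (fun i => φ i ⌊t * s i⌋ + a * (⌊t * s i⌋ / s i) ^ 2) l (𝓝 0) := by
    have hbound := ((hx.abs.add (hx.abs.pow 3)).const_mul C).div_atTop hs
    refine squeeze_zero_norm' ?_ hbound
    filter_upwards [hmem, hφ] with i hi hφi using hφi _ hi
  have hlim : Tendsto (fun i => φ i ⌊t * s i⌋) l (𝓝 (-a * t ^ 2)) := by
    simpa only [add_sub_cancel_right, zero_sub, neg_mul] using
      herr.sub ((hx.pow 2).const_mul a)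
  refine ((Real.continuous_exp.tendsto (-a * t ^ 2)).comp hlim).congr' ?_
  filter_upwards [hmem] with i hi
  simp only [Function.comp_apply, Set.indicator_of_mem (Finset.mem_coe.2 hi)]

lemma eventually_exp_floor_mul_le (ha : 0 < a) (hs : Tendsto s l atTop)
    (hS : ∀ ε > 0, ∀ᶠ i in l, ∀ j ∈ S i, |(j : ℝ)| ≤ ε * s i ^ 2)
    (hφ : ∀ᶠ i in l, ∀ j ∈ S i,
      |φ i j + a * (j / s i) ^ 2| ≤ C * (|j / s i| + |j / s i| ^ 3) / s i) :
    ∀ᶠ i in l, ∀ t : ℝ, ‖(S i : Set ℤ).indicator (fun j => Real.exp (φ i j)) ⌊t * s i⌋‖ ≤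
      Real.exp a * Real.exp (-(a / 4) * t ^ 2) := by
  have hε : 0 < a / (2 * (|C| + 1)) := by positivity
  filter_upwards [hs.eventually_ge_atTop 1, hφ, hS _ hε]
    with i hsi hφi hSi t
  have hsi0 : 0 < s i := zero_lt_one.trans_le hsi
  rw [norm_indicator_eq_indicator_norm]
  refine Set.indicator_apply_le' (fun hj => ?_) fun _ => by positivity
  set j := ⌊t * s i⌋
  have hsmall : |C| * |j / s i| ≤ a / 2 * s i := by
    rw [abs_div, abs_of_pos hsi0, mul_div_assoc', div_le_iff₀ hsi0]
    calc |C| * |(j : ℝ)| ≤ (|C| + 1) * (a / (2 * (|C| + 1)) * s i ^ 2) := by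
          gcongr
          · exact (lt_add_one _).le
          · exact hSi j hj
      _ = a / 2 * s i * s i := by field_simp
  have hexponent : φ i j + a * (j / s i) ^ 2 ≤ a / 2 * (1 + (j / s i) ^ 2) :=
    (le_abs_self _).trans ((hφi j hj).trans (mul_abs_add_abs_pow_three_div_le hsi0 hsmall))
  rw [Real.norm_of_nonneg (Real.exp_pos _).le, ← Real.exp_add, Real.exp_le_exp]
  linarith [mul_le_mul_of_nonneg_left (sq_le_two_mul_floor_mul_div_sq_add hsi t) ha.le]

theorem tendsto_sum_exp_div_of_abs_add_mul_sq_le [l.IsCountablyGenerated] (ha : 0 < a)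
    (hs : Tendsto s l atTop)
    (hS_large : ∀ T : ℝ, ∀ᶠ i in l, ∀ j : ℤ, |(j : ℝ)| ≤ T * s i → j ∈ S i)
    (hS_small : ∀ ε > 0, ∀ᶠ i in l, ∀ j ∈ S i, |(j : ℝ)| ≤ ε * s i ^ 2)
    (hφ : ∀ᶠ i in l, ∀ j ∈ S i,
      |φ i j + a * (j / s i) ^ 2| ≤ C * (|j / s i| + |j / s i| ^ 3) / s i) :
    Tendsto (fun i => (∑ j ∈ S i, Real.exp (φ i j)) / s i) l (𝓝 √(Real.pi / a)) := by
  rw [← integral_gaussian]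
  refine (tendsto_inv_smul_tsum_of_dominated (hs.eventually_gt_atTop 0)
    ((integrable_exp_neg_mul_sq (show 0 < a / 4 by positivity)).const_mul (Real.exp a))
    ((eventually_exp_floor_mul_le ha hs hS_small hφ).mono fun _ h => .of_forall h)
    (.of_forall (tendsto_exp_floor_mul_of_abs_add_mul_sq_le hs hS_large hφ))).congr fun i => ?_
  rw [← sum_eq_tsum_indicator, smul_eq_mul, inv_mul_eq_div]

end GaussianSums

lemma abs_sub_zero_le_of_abs_succ_sub_le {e : ℕ → ℝ} {N : ℕ} {α β : ℝ} (hβ : 0 ≤ β)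
    (he : ∀ i < N, |e (i + 1) - e i| ≤ α + β * ((i : ℝ) + 1) ^ 2) :
    |e N - e 0| ≤ α * N + β * (N : ℝ) ^ 3 := by
  induction N with
  | zero => simp
  | succ N ih =>
    have hcube : β * ((N : ℝ) + 1) ^ 2 + β * (N : ℝ) ^ 3 ≤ β * ((N : ℝ) + 1) ^ 3 := by
      rw [← mul_add]
      gcongr
      nlinarith [N.cast_nonneg (α := ℝ)]
    push_cast
    linarith [abs_sub_le (e (N + 1)) (e N) (e 0), he N N.lt_succ_self,
      ih fun i hi => he i (hi.trans N.lt_succ_self)]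

lemma abs_sub_le_of_abs_succ_sub_le {e : ℕ → ℝ} {k m : ℕ} {α β R : ℝ} (hβ : 0 ≤ β)
    (he : ∀ i : ℕ, |(i : ℝ) - k| ≤ R → |e (i + 1) - e i| ≤ α + β * ((i : ℝ) - k) ^ 2)
    (hm : |(m : ℝ) - k| ≤ R) :
    |e m - e k| ≤ α * |(m : ℝ) - k| + β * |(m : ℝ) - k| ^ 3 := by
  rcases le_total k m with hkm | hmk
  · obtain ⟨N, rfl⟩ := Nat.exists_eq_add_of_le hkm
    have hdist (i : ℕ) : |((k + i : ℕ) : ℝ) - k| = i := by simp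
    rw [hdist] at hm ⊢
    refine abs_sub_zero_le_of_abs_succ_sub_le (e := fun i => e (k + i)) hβ fun i hi => ?_
    have hiN : (i : ℝ) ≤ N := by exact_mod_cast hi.le
    refine (he (k + i) ((hdist i).trans_le (hiN.trans hm))).trans ?_
    rw [← sq_abs, hdist]
    gcongr
    exact (lt_add_one _).le
  · obtain ⟨N, rfl⟩ := Nat.exists_eq_add_of_le hmk
    have hdist : |(m : ℝ) - (m + N : ℕ)| = N := by simp
    have hback := abs_sub_zero_le_of_abs_succ_sub_le (e := fun i => e (m + N - i)) (N := N)
      (α := α) hβ fun i hi => ?_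
    · simpa only [hdist, Nat.add_sub_cancel, Nat.sub_zero] using hback
    obtain ⟨q, rfl⟩ := Nat.exists_eq_add_of_lt hi
    have hq : ((m + q : ℕ) : ℝ) - (m + (i + q + 1) : ℕ) = -(i + 1) := by push_cast; ring
    have hstep := he (m + q) ?_
    · rwa [hq, neg_sq, abs_sub_comm, show m + q = m + (i + q + 1) - (i + 1) by omega,
        show m + (i + q + 1) - (i + 1) + 1 = m + (i + q + 1) - i by omega] at hstep
    · rw [hq, abs_neg, abs_of_nonneg (by positivity)]
      refine le_trans ?_ (hdist ▸ hm)
      push_cast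
      linarith [q.cast_nonneg (α := ℝ)]

lemma abs_add_log_one_sub_le {x : ℝ} (hx : |x| ≤ 1 / 2) :
    |x + Real.log (1 - x)| ≤ 2 * x ^ 2 := by
  have htaylor := Real.abs_log_sub_add_sum_range_le (hx.trans_lt one_half_lt_one) 1
  simp only [Finset.sum_range_one, zero_add, pow_one, Nat.cast_zero, div_one, one_add_one_eq_two,
    sq_abs] at htaylor
  refine htaylor.trans ?_
  rw [div_le_iff₀ (by linarith)]
  nlinarith [sq_nonneg x]

lemma choose_add_one_mul_mul (p d : ℕ) :
    (p + d + 1).choose (p + 1) * ((p + 1) * (p + d + 2)) =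
      (p + d + 2).choose p * ((d + 2) * (d + 1)) := by
  have hlower := Nat.choose_succ_right_eq (p + d + 2) p
  have hupper := Nat.choose_mul_succ_eq (p + d + 1) (p + 1)
  rw [show p + d + 2 - p = d + 2 by omega] at hlower
  rw [show p + d + 1 + 1 - (p + 1) = d + 1 by omega] at hupper
  calc (p + d + 1).choose (p + 1) * ((p + 1) * (p + d + 2))
      = (p + d + 1).choose (p + 1) * (p + d + 1 + 1) * (p + 1) := by ring
    _ = (p + d + 2).choose (p + 1) * (p + 1) * (d + 1) := by rw [hupper]; ring
    _ = (p + d + 2).choose p * ((d + 2) * (d + 1)) := by rw [hlower]; ring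

lemma Psi0_pos {n m : ℕ} (hm : 1 ≤ m) (hmn : 2 * m ≤ n) : 0 < Psi0 n m := by
  have hmatch : 0 < numMatchings (n - 2 * m) := Nat.doubleFactorial_pos _
  have hchoose : 0 < (n - m - 1).choose (m - 1) := Nat.choose_pos (by omega)
  unfold Psi0
  positivity

/-- The ratio `Ψ₀(m + 1) / Ψ₀(m)` as a function of real `n` and `m`. -/
noncomputable def stepRatio (n m : ℝ) : ℝ :=
  2 * (m + 1) * (n - 2 * m) / (m * (n - m - 1))

lemma numMatchings_add_two (d : ℕ) : numMatchings (d + 2) = (d + 1) * numMatchings d :=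
  Nat.doubleFactorial_add_one d

lemma Psi0_succ {n m : ℕ} (hm : 1 ≤ m) (hmn : 2 * (m + 1) ≤ n) :
    Psi0 n (m + 1) = stepRatio n m * Psi0 n m := by
  obtain ⟨p, rfl⟩ := Nat.exists_eq_add_of_le' hm
  obtain ⟨d, rfl⟩ := Nat.exists_eq_add_of_le' hmn
  have hchoose : ((p + d + 1).choose (p + 1) : ℝ) * ((p + 1) * (p + d + 2)) =
      (p + d + 2).choose p * ((d + 2) * (d + 1)) := by
    exact_mod_cast choose_add_one_mul_mul p d
  unfold Psi0 stepRatio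
  rw [show d + 2 * (p + 1 + 1) - 2 * (p + 1 + 1) = d by omega,
    show d + 2 * (p + 1 + 1) - 2 * (p + 1) = d + 2 by omega,
    show d + 2 * (p + 1 + 1) - (p + 1 + 1) - 1 = p + d + 1 by omega,
    show d + 2 * (p + 1 + 1) - (p + 1) - 1 = p + d + 2 by omega,
    numMatchings_add_two, Nat.factorial_succ (p + 1), pow_succ]
  simp only [Nat.add_sub_cancel]
  push_cast
  rw [show (d : ℝ) + 2 * (p + 1 + 1) - 2 * (p + 1) = d + 2 by ring,
    show (d : ℝ) + 2 * (p + 1 + 1) - (p + 1) - 1 = p + d + 2 by ring,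
    div_mul_eq_mul_div, eq_div_iff (by positivity)]
  linear_combination (numMatchings d * (d + 2 * (p + 1 + 1)).factorial * (p + 1 + 1) *
    (p + 1).factorial * 2 ^ (p + 1) * 2 : ℝ) * hchoose

lemma abs_log_one_sub_div_add_le {u v z : ℝ} (hu : |u| ≤ 1 / 2) (hv : |v| ≤ 1 / 2)
    (hz : |z| ≤ 1 / 2) :
    |Real.log ((1 - v) / ((1 - u) * (1 - z))) + (v - u - z)| ≤
      2 * u ^ 2 + 2 * v ^ 2 + 2 * z ^ 2 := by
  have one_sub_ne_zero {x : ℝ} (hx : |x| ≤ 1 / 2) : 1 - x ≠ 0 := by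
    linarith [(abs_le.1 hx).2]
  rw [Real.log_div (one_sub_ne_zero hv) (mul_ne_zero (one_sub_ne_zero hu) (one_sub_ne_zero hz)),
    Real.log_mul (one_sub_ne_zero hu) (one_sub_ne_zero hz), abs_le]
  obtain ⟨hu_lower, hu_upper⟩ := abs_le.1 (abs_add_log_one_sub_le hu)
  obtain ⟨hv_lower, hv_upper⟩ := abs_le.1 (abs_add_log_one_sub_le hv)
  obtain ⟨hz_lower, hz_upper⟩ := abs_le.1 (abs_add_log_one_sub_le hz)
  constructor <;> linarith

-- Each of the three factors is `1 + o(1)` for `m` close to `n / 3`.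
lemma stepRatio_eq {n m : ℝ} (hn : 0 < n) (hm : 0 < m + 1) :
    stepRatio n m = (1 - 6 * (m - n / 3) / n) /
      ((1 - 1 / (m + 1)) * (1 - 3 * (m - n / 3 + 1) / (2 * n))) := by
  set c := 3 / (2 * n * (m + 1)) with hc
  have hc0 : 0 < c := by positivity
  have hnum : 1 - 6 * (m - n / 3) / n = c * (2 * (m + 1) * (n - 2 * m)) := by
    rw [hc]
    field_simp
    ring
  have hden : (1 - 1 / (m + 1)) * (1 - 3 * (m - n / 3 + 1) / (2 * n)) =
      c * (m * (n - m - 1)) := by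
    rw [hc]
    field_simp
    ring
  rw [hnum, hden, mul_div_mul_left _ _ hc0.ne', stepRatio]

lemma abs_log_stepRatio_add_le {n m : ℝ} (hn : 8 ≤ n) (hm : |m - n / 3| ≤ n / 12) :
    |Real.log (stepRatio n m) + 9 / 2 * (m - n / 3) / n| ≤
      100 * (1 / n + (m - n / 3) ^ 2 / n ^ 2) := by
  obtain ⟨hm_lower, hm_upper⟩ := abs_le.1 hm
  have hn0 : 0 < n := by linarith
  have hinv : 0 < 1 / n := one_div_pos.2 hn0
  have hm_quarter : n / 4 ≤ m + 1 := by linarith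
  rw [stepRatio_eq hn0 (by linarith)]
  set y := m - n / 3
  set u := 1 / (m + 1) with hu
  set v := 6 * y / n with hv
  set z := 3 * (y + 1) / (2 * n) with hz
  have hu0 : 0 ≤ u := one_div_nonneg.2 (by linarith)
  have hu_le : u ≤ 4 * (1 / n) := by
    rw [hu, mul_one_div, div_le_div_iff₀ (by linarith) hn0]
    linarith
  have hu_half : u ≤ 1 / 2 := by
    linarith [one_div_le_one_div_of_le (by norm_num) hn]
  have hv_half : |v| ≤ 1 / 2 := by
    rw [hv, abs_div, abs_of_pos hn0, div_le_iff₀ hn0, abs_le]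
    constructor <;> linarith
  have hz_half : |z| ≤ 1 / 2 := by
    rw [hz, abs_div, abs_of_pos (by positivity : 0 < 2 * n), div_le_iff₀ (by positivity), abs_le]
    constructor <;> linarith
  have hlinear : v - z = 9 / 2 * y / n - 3 / 2 * (1 / n) := by
    rw [hz, hv]
    field_simp
    ring
  have hu_sq : u + 2 * u ^ 2 ≤ 8 * (1 / n) := by nlinarith
  have hv_sq : 2 * v ^ 2 = 72 * (y ^ 2 / n ^ 2) := by rw [hv]; ring
  have hz_sq : 2 * z ^ 2 ≤ 9 * (1 / n + y ^ 2 / n ^ 2) :=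
    calc 2 * z ^ 2 = 9 / 2 * (y + 1) ^ 2 / n ^ 2 := by rw [hz]; field_simp; ring
      _ ≤ 9 * (n + y ^ 2) / n ^ 2 := by
        refine div_le_div_of_nonneg_right ?_ (by positivity)
        nlinarith [sq_nonneg (y - 1)]
      _ = 9 * (1 / n + y ^ 2 / n ^ 2) := by field_simp
  have hlog := abs_log_one_sub_div_add_le (abs_le.2 ⟨by linarith, hu_half⟩) hv_half hz_half
  obtain ⟨hlog_lower, hlog_upper⟩ := abs_le.1 hlog
  have hsq : 0 ≤ y ^ 2 / n ^ 2 := by positivity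
  rw [abs_le]
  constructor <;> linarith

lemma abs_sub_div_three_le (n : ℕ) : |((n / 3 : ℕ) : ℝ) - n / 3| ≤ 1 := by
  have hlower : (n : ℝ) ≤ 3 * (n / 3 : ℕ) + 3 := by exact_mod_cast (by omega)
  have hupper : 3 * ((n / 3 : ℕ) : ℝ) ≤ n := by exact_mod_cast Nat.mul_div_le n 3
  rw [abs_le]
  constructor <;> linarith

/-- The logarithm of `Ψ₀(m)` with its quadratic part around `⌊n/3⌋` compensated. -/
noncomputable def compensatedLog (n m : ℕ) : ℝ :=
  Real.log (Psi0 n m) + 9 / 4 * ((m : ℝ) - (n / 3 : ℕ)) ^ 2 / n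

lemma one_le_and_two_mul_succ_le {n m : ℕ} (hn : 24 ≤ n)
    (hm : |(m : ℝ) - (n / 3 : ℕ)| ≤ n / 24) : 1 ≤ m ∧ 2 * (m + 1) ≤ n := by
  have hnR : (24 : ℝ) ≤ n := by exact_mod_cast hn
  obtain ⟨hm_lower, hm_upper⟩ := abs_le.1 hm
  obtain ⟨hk_lower, hk_upper⟩ := abs_le.1 (abs_sub_div_three_le n)
  have hm_pos : (0 : ℝ) < m := by linarith
  have hm_le : 2 * ((m : ℝ) + 1) ≤ n := by linarith
  exact ⟨by exact_mod_cast hm_pos, by exact_mod_cast hm_le⟩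

lemma Psi0_div_pos {n m : ℕ} (hn : 24 ≤ n) (hm : |(m : ℝ) - (n / 3 : ℕ)| ≤ n / 24) :
    0 < Psi0 n m / Psi0 n (n / 3) := by
  obtain ⟨hm1, hmn⟩ := one_le_and_two_mul_succ_le hn hm
  exact div_pos (Psi0_pos hm1 (by omega)) (Psi0_pos (by omega) (by omega))

lemma compensatedLog_succ_sub {n m : ℕ} (hm : 1 ≤ m) (hmn : 2 * (m + 1) ≤ n) :
    compensatedLog n (m + 1) - compensatedLog n m =
      (Real.log (stepRatio n m) + 9 / 2 * (m - n / 3) / n) +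
        (9 / 2 * ((n : ℝ) / 3 - (n / 3 : ℕ)) + 9 / 4) / n := by
  have hsucc := Psi0_succ hm hmn
  have hΨ : 0 < Psi0 n m := Psi0_pos hm (by omega)
  have hratio : 0 < stepRatio n m :=
    pos_of_mul_pos_left (hsucc ▸ Psi0_pos (by omega) hmn) hΨ.le
  rw [compensatedLog, compensatedLog, hsucc, Real.log_mul hratio.ne' hΨ.ne']
  push_cast
  ring

lemma abs_compensatedLog_succ_sub_le {n m : ℕ} (hn : 24 ≤ n)
    (hm : |(m : ℝ) - (n / 3 : ℕ)| ≤ n / 24) :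
    |compensatedLog n (m + 1) - compensatedLog n m| ≤
      200 / n + 200 / (n : ℝ) ^ 2 * ((m : ℝ) - (n / 3 : ℕ)) ^ 2 := by
  have hnR : (24 : ℝ) ≤ n := by exact_mod_cast hn
  have hn0 : (0 : ℝ) < n := by linarith
  obtain ⟨hm1, hmn⟩ := one_le_and_two_mul_succ_le hn hm
  obtain ⟨hk_lower, hk_upper⟩ := abs_le.1 (abs_sub_div_three_le n)
  rw [compensatedLog_succ_sub hm1 hmn]
  set j := (m : ℝ) - (n / 3 : ℕ) with hj
  set y := (m : ℝ) - n / 3 with hy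
  have hyj : |y - j| ≤ 1 := by
    simpa only [hy, hj, sub_sub_sub_cancel_left] using abs_sub_div_three_le n
  have hy_le : |y| ≤ n / 12 := by linarith [abs_sub_abs_le_abs_sub y j]
  have hy_sq : y ^ 2 ≤ 2 * j ^ 2 + 2 := by
    linarith [sq_nonneg (y - 2 * j), (sq_le_one_iff_abs_le_one (y - j)).2 hyj]
  calc _ ≤ |Real.log (stepRatio n m) + 9 / 2 * y / n| +
        |(9 / 2 * ((n : ℝ) / 3 - (n / 3 : ℕ)) + 9 / 4) / n| := abs_add_le _ _
    _ ≤ 100 * (1 / n + y ^ 2 / n ^ 2) + 7 / n := by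
      gcongr
      · exact abs_log_stepRatio_add_le (by linarith) hy_le
      · rw [abs_div, abs_of_pos hn0]
        gcongr
        rw [abs_le]
        constructor <;> linarith
    _ ≤ 100 * (1 / n + (2 * j ^ 2 + 2) / n ^ 2) + 7 / n := by
      gcongr
    _ ≤ 200 / n + 200 / (n : ℝ) ^ 2 * j ^ 2 := by
      have hinv_sq : 1 / (n : ℝ) ^ 2 ≤ 1 / 24 * (1 / n) := by
        rw [mul_one_div, div_div, pow_two]
        exact one_div_le_one_div_of_le (by positivity) (by gcongr)
      have hinv : 0 < 1 / (n : ℝ) := one_div_pos.2 hn0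
      linear_combination 200 * hinv_sq + 254 / 3 * hinv

lemma abs_log_Psi0_div_add_le {n m : ℕ} (hn : 24 ≤ n)
    (hm : |(m : ℝ) - (n / 3 : ℕ)| ≤ n / 24) :
    |Real.log (Psi0 n m / Psi0 n (n / 3)) + 9 / 4 * (((m : ℝ) - (n / 3 : ℕ)) / √n) ^ 2| ≤
      200 * (|((m : ℝ) - (n / 3 : ℕ)) / √n| + |((m : ℝ) - (n / 3 : ℕ)) / √n| ^ 3) / √n := by
  have hn0 : 0 < √(n : ℝ) := Real.sqrt_pos.2 (by exact_mod_cast (by omega : 0 < n))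
  have hsq : √(n : ℝ) ^ 2 = n := Real.sq_sqrt n.cast_nonneg
  have htelescope := abs_sub_le_of_abs_succ_sub_le (by positivity)
    (fun i hi => abs_compensatedLog_succ_sub_le hn hi) hm
  have hlog : Real.log (Psi0 n m / Psi0 n (n / 3)) =
      Real.log (Psi0 n m) - Real.log (Psi0 n (n / 3)) := by
    obtain ⟨hm0, hk0⟩ := div_ne_zero_iff.1 (Psi0_div_pos hn hm).ne'
    exact Real.log_div hm0 hk0
  calc _ = |compensatedLog n m - compensatedLog n (n / 3)| := by
        rw [hlog, compensatedLog, compensatedLog, div_pow, hsq]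
        ring_nf
    _ ≤ 200 / √n ^ 2 * |(m : ℝ) - (n / 3 : ℕ)| +
        200 / (√n ^ 2) ^ 2 * |(m : ℝ) - (n / 3 : ℕ)| ^ 3 := by rwa [hsq]
    _ = _ := by
        rw [abs_div, abs_of_pos hn0]
        field_simp

/-- The integers `m` with `⌈(1/3 − δ)n⌉ ≤ m ≤ ⌊(1/3 + δ)n⌋`. -/
noncomputable def centralWindow (δ : ℝ) (n : ℕ) : Finset ℕ :=
  Finset.Icc ⌈((1 : ℝ) / 3 - δ) * n⌉₊ ⌊((1 : ℝ) / 3 + δ) * n⌋₊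

lemma mem_centralWindow_iff {δ : ℝ} (hδ : 0 ≤ δ) {n m : ℕ} :
    m ∈ centralWindow δ n ↔ |(m : ℝ) - n / 3| ≤ δ * n := by
  rw [centralWindow, Finset.mem_Icc, Nat.ceil_le, Nat.le_floor_iff (by positivity), abs_sub_le_iff]
  constructor <;> rintro ⟨hlower, hupper⟩ <;> constructor <;> linarith

/-- The offsets `m - ⌊n/3⌋` of the elements `m` of `centralWindow δ n`. -/
noncomputable def centralOffsets (δ : ℝ) (n : ℕ) : Finset ℤ :=
  (centralWindow δ n).image fun m : ℕ => (m : ℤ) - (n / 3 : ℕ)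

lemma sum_centralOffsets {M : Type*} [AddCommMonoid M] (f : ℤ → M) (δ : ℝ) (n : ℕ) :
    ∑ j ∈ centralOffsets δ n, f j = ∑ m ∈ centralWindow δ n, f ((m : ℤ) - (n / 3 : ℕ)) :=
  Finset.sum_image fun _ _ _ _ h => Nat.cast_injective (sub_left_injective h)

lemma mem_centralOffsets_of_abs_add_one_le {δ : ℝ} {n : ℕ} {j : ℤ} (hδ : δ ≤ 1 / 3)
    (hj : |(j : ℝ)| + 1 ≤ δ * n) : j ∈ centralOffsets δ n := by
  obtain ⟨hk_lower, hk_upper⟩ := abs_le.1 (abs_sub_div_three_le n)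
  obtain ⟨hj_lower, hj_upper⟩ := abs_le.1 (le_sub_iff_add_le.2 hj)
  have hδ0 : 0 ≤ δ :=
    (pos_of_mul_pos_left (lt_of_lt_of_le (by positivity) hj) n.cast_nonneg).le
  have hδn : δ * n ≤ 1 / 3 * n := by gcongr
  set k := n / 3
  have hkj : 0 ≤ k + j := by
    have hkj_real : (0 : ℝ) ≤ k + j := by linarith
    exact_mod_cast hkj_real
  obtain ⟨m, hm⟩ := Int.eq_ofNat_of_zero_le hkj
  have hm_real : (k : ℝ) + j = m := by exact_mod_cast hm
  refine Finset.mem_image.2 ⟨m, (mem_centralWindow_iff hδ0).2 ?_, by rw [← hm, add_sub_cancel_left]⟩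
  rw [abs_le]
  constructor <;> linarith

lemma abs_sub_natCast_div_three_le_of_mem_centralWindow {δ : ℝ} (hδ : 0 ≤ δ) {n m : ℕ}
    (hm : m ∈ centralWindow δ n) : |(m : ℝ) - (n / 3 : ℕ)| ≤ δ * n + 1 := by
  have hk := abs_sub_div_three_le n
  rw [abs_sub_comm] at hk
  exact (abs_sub_le _ _ _).trans (add_le_add ((mem_centralWindow_iff hδ).1 hm) hk)

section CentralWindowAsymptotics

variable {δ : ℕ → ℝ}

lemma eventually_mem_centralOffsets (hδ_zero : Tendsto δ atTop (𝓝 0))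
    (hδ_sqrt : Tendsto (fun n => δ n * √n) atTop atTop) (T : ℝ) :
    ∀ᶠ n : ℕ in atTop, ∀ j : ℤ, |(j : ℝ)| ≤ T * √n → j ∈ centralOffsets (δ n) n := by
  filter_upwards [hδ_zero.eventually_le_const (show (0 : ℝ) < 1 / 3 by norm_num),
    hδ_sqrt.eventually_ge_atTop (T + 1), eventually_ge_atTop 1] with n hδn hTn hn j hj
  refine mem_centralOffsets_of_abs_add_one_le hδn ?_
  have hsqrt : 1 ≤ √(n : ℝ) := Real.one_le_sqrt.2 (by exact_mod_cast hn)
  calc |(j : ℝ)| + 1 ≤ T * √n + √n := add_le_add hj hsqrt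
    _ = (T + 1) * √n := by ring
    _ ≤ δ n * √n * √n := by gcongr
    _ = δ n * n := by rw [mul_assoc, Real.mul_self_sqrt n.cast_nonneg]

lemma eventually_abs_le_of_mem_centralWindow (hδ_zero : Tendsto δ atTop (𝓝 0))
    (hδ_sqrt : Tendsto (fun n => δ n * √n) atTop atTop) {ε : ℝ} (hε : 0 < ε) :
    ∀ᶠ n : ℕ in atTop, ∀ m ∈ centralWindow (δ n) n, |(m : ℝ) - (n / 3 : ℕ)| ≤ ε * n := by
  filter_upwards [hδ_zero.eventually_le_const (half_pos hε), hδ_sqrt.eventually_gt_atTop 0,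
    tendsto_natCast_atTop_atTop.eventually_ge_atTop (2 / ε)] with n hδn hδn_pos hn m hm
  have hδ0 : 0 ≤ δ n := (pos_of_mul_pos_left hδn_pos (Real.sqrt_nonneg _)).le
  have hone : 1 ≤ ε / 2 * n := by
    rw [div_le_iff₀ hε] at hn
    linarith
  calc |(m : ℝ) - (n / 3 : ℕ)| ≤ δ n * n + 1 :=
        abs_sub_natCast_div_three_le_of_mem_centralWindow hδ0 hm
    _ ≤ ε / 2 * n + ε / 2 * n := by gcongr
    _ = ε * n := by ring

lemma sqrt_pi_div_nine_fourths : √(Real.pi / (9 / 4)) = 2 / 3 * √Real.pi := by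
  rw [Real.sqrt_div Real.pi_pos.le, show (9 / 4 : ℝ) = (3 / 2) ^ 2 by norm_num,
    Real.sqrt_sq (by norm_num)]
  ring

theorem tendsto_sum_Psi0_centralWindow (hδ_zero : Tendsto δ atTop (𝓝 0))
    (hδ_sqrt : Tendsto (fun n => δ n * √n) atTop atTop) :
    Tendsto (fun n : ℕ => (∑ m ∈ centralWindow (δ n) n, Psi0 n m) / (√n * Psi0 n (n / 3)))
      atTop (𝓝 (2 / 3 * √Real.pi)) := by
  have hnear : ∀ᶠ n : ℕ in atTop, 24 ≤ n ∧ ∀ m ∈ centralWindow (δ n) n,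
      |(m : ℝ) - (n / 3 : ℕ)| ≤ n / 24 := by
    filter_upwards [eventually_ge_atTop 24, eventually_abs_le_of_mem_centralWindow hδ_zero hδ_sqrt
      (show (0 : ℝ) < 1 / 24 by norm_num)] with n hn hsmall
    exact ⟨hn, fun m hm => (hsmall m hm).trans_eq (by ring)⟩
  have hlaplace := tendsto_sum_exp_div_of_abs_add_mul_sq_le (a := 9 / 4) (C := 200) (by norm_num)
    (Real.tendsto_sqrt_atTop.comp tendsto_natCast_atTop_atTop)
    (eventually_mem_centralOffsets hδ_zero hδ_sqrt)
    (φ := fun n j => Real.log (Psi0 n ((n / 3 : ℕ) + j).toNat / Psi0 n (n / 3)))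
    (fun ε hε => ?_) ?_
  · rw [sqrt_pi_div_nine_fourths] at hlaplace
    refine hlaplace.congr' ?_
    filter_upwards [hnear] with n ⟨hn, hm⟩
    rw [sum_centralOffsets, mul_comm, ← div_div, Finset.sum_div _ (Psi0 n), Function.comp_apply]
    refine congrArg (· / √(n : ℝ)) (Finset.sum_congr rfl fun m hmem => ?_)
    rw [add_sub_cancel, Int.toNat_natCast, Real.exp_log (Psi0_div_pos hn (hm m hmem))]
  · filter_upwards [eventually_abs_le_of_mem_centralWindow hδ_zero hδ_sqrt hε] with n hn j hj
    obtain ⟨m, hm, rfl⟩ := Finset.mem_image.1 hj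
    rw [Int.cast_sub, Int.cast_natCast, Int.cast_natCast, Function.comp_apply,
      Real.sq_sqrt n.cast_nonneg]
    exact hn m hm
  · filter_upwards [hnear] with n ⟨hn, hsmall⟩ j hj
    obtain ⟨m, hm, rfl⟩ := Finset.mem_image.1 hj
    rw [add_sub_cancel, Int.toNat_natCast, Int.cast_sub, Int.cast_natCast, Int.cast_natCast]
    exact abs_log_Psi0_div_add_le hn (hsmall m hm)

end CentralWindowAsymptotics

lemma tendsto_log_rpow_neg_third_div_two :
    Tendsto (fun n : ℕ => Real.log n ^ (-(1 : ℝ) / 3) / 2) atTop (𝓝 0) := by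
  have hlog := Real.tendsto_log_atTop.comp (tendsto_natCast_atTop_atTop (R := ℝ))
  simpa only [Function.comp_apply, neg_div, zero_div] using
    ((tendsto_rpow_neg_atTop (show (0 : ℝ) < 1 / 3 by norm_num)).comp hlog).div_const 2

lemma tendsto_log_rpow_neg_third_div_two_mul_sqrt :
    Tendsto (fun n : ℕ => Real.log n ^ (-(1 : ℝ) / 3) / 2 * √n) atTop atTop := by
  have hlog := Real.tendsto_log_atTop.comp (tendsto_natCast_atTop_atTop (R := ℝ))
  refine (((tendsto_exp_mul_div_rpow_atTop (1 / 3) (1 / 2) (by norm_num)).comp hlog).atTop_div_const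
    zero_lt_two).congr' ?_
  filter_upwards [eventually_ge_atTop 2] with n hn
  have hn1 : (1 : ℝ) < n := by exact_mod_cast hn
  have hsqrt : Real.exp (1 / 2 * Real.log n) = √n := by
    rw [Real.sqrt_eq_rpow, Real.rpow_def_of_pos (by linarith), mul_comm]
  rw [Function.comp_apply, Function.comp_apply, hsqrt, neg_div, Real.rpow_neg (Real.log_pos hn1).le]
  ring

theorem stmt15_general :
    Tendsto (fun n : ℕ => (∑ m ∈ Jn n, Psi0 n m) / (√n * Psi0 n (n / 3))) atTop
      (𝓝 (2 / 3 * √Real.pi)) :=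
  tendsto_sum_Psi0_centralWindow tendsto_log_rpow_neg_third_div_two
    tendsto_log_rpow_neg_third_div_two_mul_sqrt

/-- As `n → ∞` through even integers,
`Σ_{m ∈ J_n} Ψ₀(m) / (√n · Ψ₀(⌊n/3⌋)) → (2/3)·√π`. -/
theorem stmt15 (N : ℕ → ℕ) (hNeven : ∀ i, Even (N i)) (hNpos : ∀ i, 0 < N i)
    (hN : Filter.Tendsto N Filter.atTop Filter.atTop) :
    Filter.Tendsto
      (fun i => (∑ m ∈ Jn (N i), Psi0 (N i) m) / (Real.sqrt (N i) * Psi0 (N i) (N i / 3)))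
      Filter.atTop (nhds (2 / 3 * Real.sqrt Real.pi)) :=
  stmt15_general.comp hN
end
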